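/- arXiv:2505.02897 — 4 statements merged into one kernel-verified Lean document; each statement's English description precedes it below -/
import Mathlib

section
/- Fix A > 0 and β > 0. For every compact interval I ⊂ ℝ, lim_{J→∞} sup_{h∈I} | √(2J) · e^{−4π√(A·J)} · D_vac^β(J, h) − ρ_c(h) | = 0; that is, √(2J)·e^{−4π√(AJ)}·D_vac^β(J,·) converges to ρ_c uniformly on compact intervals. -/
open MeasureTheory Filter Topology Real

noncomputable section

/-- The contour point `z = α_J + i t` with `α_J = 2π√(A/J)`. -/
def zline (A : ℝ) (J : ℤ) (t : ℝ) : ℂ :=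
  ((2 * π * Real.sqrt (A / (J : ℝ)) : ℝ) : ℂ) + (t : ℂ) * Complex.I

/-- The vacuum term `F_vac(β_L, J)` (principal branch square root). -/
def Fvac (A : ℝ) (βL : ℂ) (J : ℤ) : ℂ :=
  ∫ t in (-π)..π, (1 / (2 * π) : ℝ) •
    (Complex.exp (zline A J t * (J : ℂ)) *
      ((4 * (π : ℂ) ^ 2) / (zline A J t * (βL - zline A J t))) ^ ((1 : ℂ) / 2) *
      Complex.exp ((4 * (π : ℂ) ^ 2 * (A : ℂ)) / (βL - zline A J t) +
        (4 * (π : ℂ) ^ 2 * (A : ℂ)) / zline A J t) *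
      (1 - Complex.exp (-(4 * (π : ℂ) ^ 2) / (βL - zline A J t))) *
      (1 - Complex.exp (-(4 * (π : ℂ) ^ 2) / zline A J t)))

/-- The spin-`J` vacuum density `D_vac^β(J, h)`, the inverse Laplace transform of `F_vac`. -/
def Dvac (A β : ℝ) (J : ℤ) (h : ℝ) : ℂ :=
  ∫ s : ℝ, (1 / (2 * π) : ℝ) •
    (Fvac A ((β : ℂ) + (s : ℂ) * Complex.I) J *
      Complex.exp (((β : ℂ) + (s : ℂ) * Complex.I) * ((h : ℂ) - (A : ℂ))))

/-- The crossed-channel density `ρ_c(h)`; for `0 < A < 1` the second `cosh` is a `cos`. -/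
def rhoc (A : ℝ) (h : ℝ) : ℝ :=
  if h ≤ A then 0
  else Real.sqrt (2 / (h - A)) *
    (Real.cosh (4 * π * Real.sqrt (A * (h - A))) -
      (if 1 ≤ A then Real.cosh (4 * π * Real.sqrt ((A - 1) * (h - A)))
       else Real.cos (4 * π * Real.sqrt ((1 - A) * (h - A)))))

/-!
On the contour of `Fvac`, both `z` and `βL - z` lie in the right half-plane once `α_J < β`, so the
square root splits and the integrand is a product of a function of `z` and the same kernel
`w ↦ w^{-1/2} e^{4π²A/w} (1 - e^{-4π²/w})` at `w = βL - z`. As `βL` runs along `Re βL = β`, the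
double integral defining `D_vac` is a convolution, and it factors exactly:

* The `w`-integral is a Bromwich integral. Gaussian integration (after `x = y²`) shows that the
  kernel is the Laplace transform of `(cosh (p√x) - cosh (q√x)) / √x` up to a constant, with
  `p² = 16π²A` and `q² = 16π²(A - 1)`, so Fourier inversion gives a constant times `ρ_c(h)`
  with no dependence on `J`.
* The `z`-integral has its saddle point at `z = α_J`. With `z = a² + i a³ u`, `a² = α_J`, its
  exponent is `4π√(AJ) - c u² / (1 + i a u)` with `c = 4π²A`, and dominated convergence gives the
  Gaussian limit. Only a bounded factor depends on `h`, hence uniformity for bounded `h`.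
-/
open Complex (I)
open scoped Complex FourierTransform

section HalfPlane

variable {z w : ℂ}

lemma re_ofReal_div_pos {r : ℝ} (hr : 0 < r) (hz : 0 < z.re) : 0 < ((r : ℂ) / z).re := by
  rw [div_eq_mul_inv, Complex.re_ofReal_mul, Complex.inv_re]
  have := Complex.normSq_pos.mpr (Complex.ne_zero_of_re_pos hz)
  positivity

lemma mul_cpow_of_re_pos (hz : 0 < z.re) (hw : 0 < w.re) (s : ℂ) :
    (z * w) ^ s = z ^ s * w ^ s := by
  have hz0 := Complex.ne_zero_of_re_pos hz
  have hw0 := Complex.ne_zero_of_re_pos hw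
  have hz_arg := abs_lt.mp (Complex.abs_arg_lt_pi_div_two_iff.mpr (.inl hz))
  have hw_arg := abs_lt.mp (Complex.abs_arg_lt_pi_div_two_iff.mpr (.inl hw))
  have hlog : Complex.log (z * w) = Complex.log z + Complex.log w :=
    Complex.log_mul hz0 hw0 ⟨by linarith, by linarith⟩
  simp only [Complex.cpow_def_of_ne_zero, hz0, hw0, mul_ne_zero, ne_eq, not_false_eq_true, hlog,
    add_mul, Complex.exp_add]

lemma ofReal_cpow_half {r : ℝ} (hr : 0 ≤ r) : (r : ℂ) ^ (1 / 2 : ℂ) = √r := by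
  rw [Real.sqrt_eq_rpow, Complex.ofReal_cpow hr]
  norm_num

lemma ofReal_div_cpow_half {r : ℝ} (hr : 0 < r) (hz : 0 < z.re) :
    ((r : ℂ) / z) ^ (1 / 2 : ℂ) = √r * z ^ (-(1 / 2) : ℂ) := by
  have hz_inv : 0 < z⁻¹.re := by simpa using re_ofReal_div_pos one_pos hz
  have hz_arg : z.arg ≠ π := Complex.slitPlane_arg_ne_pi (.inl hz)
  rw [div_eq_mul_inv, mul_cpow_of_re_pos (by simpa using hr) hz_inv, ofReal_cpow_half hr.le,
    Complex.inv_cpow _ _ hz_arg, Complex.cpow_neg]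

lemma ofReal_div_mul_cpow_half {r : ℝ} (hr : 0 < r) (hz : 0 < z.re) (hw : 0 < w.re) :
    ((r : ℂ) / (z * w)) ^ (1 / 2 : ℂ) = √r * z ^ (-(1 / 2) : ℂ) * w ^ (-(1 / 2) : ℂ) := by
  have hw_inv : 0 < ((1 : ℝ) / w : ℂ).re := re_ofReal_div_pos one_pos hw
  rw [show (r : ℂ) / (z * w) = r / z * ((1 : ℝ) / w) by push_cast; field_simp,
    mul_cpow_of_re_pos (re_ofReal_div_pos hr hz) hw_inv, ofReal_div_cpow_half hr hz,
    ofReal_div_cpow_half one_pos hw]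
  simp

lemma norm_cpow_neg_half (z : ℂ) : ‖z ^ (-(1 / 2) : ℂ)‖ = ‖z‖ ^ (-(1 / 2) : ℝ) := by
  rw [← Complex.norm_cpow_real]
  push_cast
  rfl

lemma norm_one_sub_exp_le (z : ℂ) : ‖1 - cexp z‖ ≤ ‖z‖ * rexp ‖z‖ := by
  simpa [norm_sub_rev] using Complex.norm_exp_sub_sum_le_norm_mul_exp z 1

lemma norm_exp_neg_div_le_one {d : ℝ} (hd : 0 < d) (hz : 0 < z.re) : ‖cexp (-d / z)‖ ≤ 1 := by
  rw [Complex.norm_exp, neg_div, Complex.neg_re, Real.exp_le_one_iff]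
  exact (neg_neg_of_pos (re_ofReal_div_pos hd hz)).le

lemma integrable_norm_verticalLine_rpow_neg {γ r : ℝ} (hγ : 0 < γ) (hr : 1 < r) :
    Integrable fun s : ℝ => ‖(γ : ℂ) + s * I‖ ^ (-r) := by
  have hbracket : Integrable fun s : ℝ => (1 + ‖s‖ ^ 2) ^ (-r / 2) :=
    integrable_rpow_neg_one_add_norm_sq (by simpa using hr)
  convert (hbracket.comp_div hγ.ne').const_mul (γ ^ (-r)) using 2 with s
  have hnorm : ‖(γ : ℂ) + s * I‖ = γ * (1 + ‖s / γ‖ ^ 2) ^ (1 / 2 : ℝ) := by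
    rw [← Real.sqrt_eq_rpow, Complex.norm_add_mul_I, Real.norm_eq_abs, sq_abs,
      ← Real.sqrt_sq hγ.le, ← Real.sqrt_mul (by positivity), Real.sqrt_sq hγ.le]
    congr 1
    field_simp
  rw [hnorm, Real.mul_rpow hγ.le (by positivity), ← Real.rpow_mul (by positivity)]
  ring_nf

end HalfPlane

section BilateralLaplace

variable {E : Type*} [NormedAddCommGroup E] [NormedSpace ℂ E]

/-- The two-sided Laplace transform `w ↦ ∫ e^{-wx} f(x) dx` over the whole real line. -/
def bilateralLaplace (f : ℝ → E) (w : ℂ) : E :=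
  ∫ x : ℝ, cexp (-w * x) • f x

lemma fourier_exp_neg_mul_smul (f : ℝ → E) (γ : ℝ) :
    𝓕 (fun x : ℝ => cexp (-γ * x) • f x) =
      fun ξ : ℝ => bilateralLaplace f (γ + (2 * π * ξ : ℝ) * I) := by
  funext ξ
  rw [Real.fourier_real_eq_integral_exp_smul, bilateralLaplace]
  congr 1 with x
  rw [smul_smul, ← Complex.exp_add]
  congr 2
  push_cast
  ring

theorem integral_exp_mul_smul_bilateralLaplace [CompleteSpace E] {f : ℝ → E} {γ x : ℝ}
    (hf : Integrable fun y : ℝ => cexp (-γ * y) • f y)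
    (hLf : Integrable fun s : ℝ => bilateralLaplace f (γ + s * I)) (hfx : ContinuousAt f x) :
    ∫ s : ℝ, cexp ((γ + s * I) * x) • bilateralLaplace f (γ + s * I) = (2 * π : ℂ) • f x := by
  set L : ℝ → E := fun s => cexp ((γ + s * I) * x) • bilateralLaplace f (γ + s * I)
  have hcont : ContinuousAt (fun y : ℝ => cexp (-γ * y) • f y) x := by fun_prop
  have hfourier : Integrable (𝓕 fun y : ℝ => cexp (-γ * y) • f y) := by
    rw [fourier_exp_neg_mul_smul]
    exact hLf.comp_mul_left' (by positivity)
  have hinv := hf.fourierInv_fourier_eq hfourier hcont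
  have hshift : ∀ ξ : ℝ, cexp ((2 * π * inner ℝ ξ x : ℝ) * I) •
      bilateralLaplace f (γ + (2 * π * ξ : ℝ) * I) = cexp (-γ * x) • L (2 * π * ξ) := fun ξ => by
    rw [smul_smul, ← Complex.exp_add]
    congr 2
    simp only [RCLike.inner_apply, ringHom_apply, Complex.ofReal_mul, Complex.ofReal_ofNat, neg_mul]
    ring
  rw [fourier_exp_neg_mul_smul, Real.fourierInv_eq'] at hinv
  simp only [hshift] at hinv
  rw [integral_smul, Measure.integral_comp_mul_left, abs_of_pos (by positivity)] at hinv
  have hL := smul_right_injective E (Complex.exp_ne_zero _) hinv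
  rw [← hL, ← Complex.coe_smul, smul_smul]
  push_cast
  rw [mul_inv_cancel₀ (by simp [pi_ne_zero]), one_smul]

end BilateralLaplace

section SquareSubstitution

variable {E : Type*} [NormedAddCommGroup E] [NormedSpace ℝ E]

lemma two_mul_rpow_smul_inv_sqrt_smul (f : ℝ → E) {y : ℝ} (hy : 0 < y) :
    (2 * y ^ ((2 : ℝ) - 1)) • ((√(y ^ (2 : ℝ)))⁻¹ • f √(y ^ (2 : ℝ))) = (2 : ℝ) • f y := by
  have hexp : (2 : ℝ) - 1 = 1 := by norm_num
  rw [hexp, rpow_one, rpow_two, Real.sqrt_sq hy.le, smul_smul, mul_assoc,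
    mul_inv_cancel₀ hy.ne', mul_one]

lemma integrableOn_Ioi_inv_sqrt_smul_comp_sqrt {f : ℝ → E} (hf : IntegrableOn f (Set.Ioi 0)) :
    IntegrableOn (fun x => (√x)⁻¹ • f √x) (Set.Ioi 0) := by
  rw [← integrableOn_Ioi_comp_rpow_iff _ (two_ne_zero (α := ℝ))]
  refine IntegrableOn.congr_fun (f := fun y => (2 : ℝ) • f y) (hf.smul (2 : ℝ)) (fun y hy => ?_)
    measurableSet_Ioi
  rw [abs_two, two_mul_rpow_smul_inv_sqrt_smul f hy]

lemma integral_Ioi_inv_sqrt_smul_comp_sqrt (f : ℝ → E) :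
    ∫ x in Set.Ioi 0, (√x)⁻¹ • f √x = (2 : ℝ) • ∫ y in Set.Ioi 0, f y := by
  rw [← integral_comp_rpow_Ioi_of_pos (two_pos (α := ℝ)), ← integral_smul]
  exact setIntegral_congr_fun measurableSet_Ioi fun y hy => two_mul_rpow_smul_inv_sqrt_smul f hy

lemma integral_eq_two_smul_integral_Ioi_of_even {f : ℝ → E} (hf : Integrable f)
    (heven : Function.Even f) : ∫ y, f y = (2 : ℝ) • ∫ y in Set.Ioi 0, f y := by
  have hneg : ∫ y in Set.Iic 0, f y = ∫ y in Set.Ioi 0, f y := by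
    simpa only [heven _, neg_zero] using (integral_comp_neg_Ioi (0 : ℝ) f).symm
  rw [← intervalIntegral.integral_Iic_add_Ioi (b := 0) hf.integrableOn hf.integrableOn, hneg,
    two_smul]

end SquareSubstitution

section VacuumKernel

/-- The factor `w^{-1/2} e^{c/w} (1 - e^{-d/w})` contributed by one chiral half of the vacuum
character; with `c = 4π²A` and `d = 4π²` the integrand of `Fvac` is
`2π e^{zJ} vacKernel c d z * vacKernel c d (βL - z)`. -/
def vacKernel (c d w : ℂ) : ℂ :=
  w ^ (-(1 / 2) : ℂ) * cexp (c / w) * (1 - cexp (-d / w))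

lemma continuousAt_vacKernel (c d : ℂ) {w : ℂ} (hw : 0 < w.re) :
    ContinuousAt (vacKernel c d) w := by
  have hw0 := Complex.ne_zero_of_re_pos hw
  have hslit : w ∈ Complex.slitPlane := .inl hw
  unfold vacKernel
  fun_prop (disch := assumption)

lemma continuous_vacKernel_verticalLine (c d : ℂ) {γ : ℝ} (hγ : 0 < γ) :
    Continuous fun s : ℝ => vacKernel c d (γ + s * I) :=
  continuous_iff_continuousAt.mpr fun s =>
    ContinuousAt.comp (f := fun s : ℝ => (γ : ℂ) + s * I)
      (continuousAt_vacKernel c d (by simpa using hγ)) (by fun_prop)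

lemma norm_vacKernel_le (c d : ℂ) {w : ℂ} {γ : ℝ} (hγ : 0 < γ) (hw : γ ≤ ‖w‖) :
    ‖vacKernel c d w‖ ≤ rexp (‖c‖ / γ) * (‖d‖ * rexp (‖d‖ / γ)) * ‖w‖ ^ (-(3 / 2) : ℝ) := by
  have hw0 : 0 < ‖w‖ := hγ.trans_le hw
  have hexp : ‖cexp (c / w)‖ ≤ rexp (‖c‖ / γ) := by
    grw [Complex.norm_exp_le_exp_norm, norm_div, hw]
  have hsub : ‖1 - cexp (-d / w)‖ ≤ ‖d‖ * rexp (‖d‖ / γ) * ‖w‖⁻¹ := by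
    calc ‖1 - cexp (-d / w)‖ ≤ ‖d‖ / ‖w‖ * rexp (‖d‖ / ‖w‖) := by
          simpa using norm_one_sub_exp_le (-d / w)
      _ ≤ ‖d‖ / ‖w‖ * rexp (‖d‖ / γ) := by gcongr
      _ = ‖d‖ * rexp (‖d‖ / γ) * ‖w‖⁻¹ := by ring
  have hpow : ‖w‖ ^ (-(1 / 2) : ℝ) * ‖w‖⁻¹ = ‖w‖ ^ (-(3 / 2) : ℝ) := by
    rw [← Real.rpow_neg_one, ← Real.rpow_add hw0]
    norm_num
  calc ‖vacKernel c d w‖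
      = ‖w‖ ^ (-(1 / 2) : ℝ) * ‖cexp (c / w)‖ * ‖1 - cexp (-d / w)‖ := by
        rw [vacKernel, norm_mul, norm_mul, norm_cpow_neg_half]
    _ ≤ ‖w‖ ^ (-(1 / 2) : ℝ) * rexp (‖c‖ / γ) * (‖d‖ * rexp (‖d‖ / γ) * ‖w‖⁻¹) := by gcongr
    _ = rexp (‖c‖ / γ) * (‖d‖ * rexp (‖d‖ / γ)) * (‖w‖ ^ (-(1 / 2) : ℝ) * ‖w‖⁻¹) := by ring
    _ = _ := by rw [hpow]

lemma integrable_vacKernel_verticalLine (c d : ℂ) {γ : ℝ} (hγ : 0 < γ) :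
    Integrable fun s : ℝ => vacKernel c d (γ + s * I) := by
  refine ((integrable_norm_verticalLine_rpow_neg hγ (by norm_num : (1 : ℝ) < 3 / 2)).const_mul
    _).mono' (continuous_vacKernel_verticalLine c d hγ).aestronglyMeasurable
    (.of_forall fun s => norm_vacKernel_le c d hγ ?_)
  simpa using Complex.re_le_norm ((γ : ℂ) + s * I)

lemma integrable_exp_mul_vacKernel_verticalLine (c d : ℂ) {γ : ℝ} (hγ : 0 < γ) (x : ℝ) :
    Integrable fun s : ℝ => cexp ((γ + s * I) * x) * vacKernel c d (γ + s * I) := by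
  refine (integrable_vacKernel_verticalLine c d hγ).bdd_mul (c := rexp (γ * x)) ?_
    (.of_forall fun s => ?_)
  · exact Continuous.aestronglyMeasurable (by fun_prop)
  · simp [Complex.norm_exp]

end VacuumKernel

section CoshDensity

variable {p q w : ℂ}

lemma exp_neg_mul_sq_mul_cosh (w p : ℂ) (y : ℝ) :
    cexp (-w * y ^ 2) * Complex.cosh (p * y) =
      1 / 2 * (cexp (-w * y ^ 2 + p * y + 0) + cexp (-w * y ^ 2 + -p * y + 0)) := by
  simp only [Complex.cosh, add_zero, Complex.exp_add, neg_mul p]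
  ring

lemma integrable_exp_neg_mul_sq_mul_cosh (hw : 0 < w.re) (p : ℂ) :
    Integrable fun y : ℝ => cexp (-w * y ^ 2) * Complex.cosh (p * y) := by
  have hw' : (-w).re < 0 := by simpa using hw
  simp only [exp_neg_mul_sq_mul_cosh]
  exact ((integrable_cexp_quadratic' hw' p 0).add
    (integrable_cexp_quadratic' hw' (-p) 0)).const_mul _

lemma integral_exp_neg_mul_sq_mul_cosh (hw : 0 < w.re) (p : ℂ) :
    ∫ y : ℝ, cexp (-w * y ^ 2) * Complex.cosh (p * y) =
      √π * w ^ (-(1 / 2) : ℂ) * cexp (p ^ 2 / (4 * w)) := by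
  have hw' : (-w).re < 0 := by simpa using hw
  have hexponent : 0 - p ^ 2 / (4 * -w) = p ^ 2 / (4 * w) := by
    rw [mul_neg, div_neg, zero_sub, neg_neg]
  simp only [exp_neg_mul_sq_mul_cosh]
  rw [integral_const_mul, integral_add (integrable_cexp_quadratic' hw' p 0)
    (integrable_cexp_quadratic' hw' (-p) 0), integral_cexp_quadratic hw',
    integral_cexp_quadratic hw', neg_sq, neg_neg, hexponent, ofReal_div_cpow_half pi_pos hw]
  ring

/-- The function `(cosh (p√x) - cosh (q√x)) / √x` of `x > 0`, extended by `0` to `x ≤ 0`: there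
`√x = 0`, so the quotient is `0 / 0 = 0`. It is the inverse Laplace transform of a multiple of
`vacKernel`, and `ρ_c` is a translate of it. -/
def coshDensity (p q : ℂ) (x : ℝ) : ℂ :=
  (Complex.cosh (p * √x) - Complex.cosh (q * √x)) / √x

lemma coshDensity_of_nonpos {x : ℝ} (hx : x ≤ 0) : coshDensity p q x = 0 := by
  simp [coshDensity, Real.sqrt_eq_zero_of_nonpos hx]

lemma hasDerivAt_cosh_mul_ofReal_zero (p : ℂ) :
    HasDerivAt (fun y : ℝ => Complex.cosh (p * y)) 0 0 := by
  have h : HasDerivAt (fun z : ℂ => Complex.cosh (p * z)) _ ((0 : ℝ) : ℂ) :=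
    ((hasDerivAt_id _).const_mul p).ccosh
  simpa using h.comp_ofReal

/- Since `cosh` is even, `(cosh (p y) - cosh (q y)) / y` has the removable value `0` at `y = 0`,
which is also the value that division by zero assigns. -/
lemma continuous_coshDensity (p q : ℂ) : Continuous (coshDensity p q) := by
  set f : ℝ → ℂ := fun y => Complex.cosh (p * y) - Complex.cosh (q * y)
  have hf : HasDerivAt f 0 0 := by
    simpa using
      (hasDerivAt_cosh_mul_ofReal_zero p).fun_sub (hasDerivAt_cosh_mul_ofReal_zero q)
  have hslope : coshDensity p q = dslope f 0 ∘ Real.sqrt := by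
    funext x
    rcases eq_or_ne √x 0 with hx | hx
    · simp [coshDensity, hx, hf.deriv]
    · simp [coshDensity, f, dslope_of_ne _ hx, slope_def_module, div_eq_inv_mul]
  have hf_cont : Continuous f := by fun_prop
  have hdslope : Continuous (dslope f 0) := by
    rw [← continuousOn_univ, continuousOn_dslope univ_mem]
    exact ⟨hf_cont.continuousOn, hf.differentiableAt⟩
  rw [hslope]
  exact hdslope.comp Real.continuous_sqrt

/-- The Gaussian weight that `exp (-w x) * coshDensity p q x` becomes after `x = y ^ 2`. -/
def gaussCoshSub (w p q : ℂ) (y : ℝ) : ℂ :=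
  cexp (-w * y ^ 2) * Complex.cosh (p * y) - cexp (-w * y ^ 2) * Complex.cosh (q * y)

lemma even_gaussCoshSub (w p q : ℂ) : Function.Even (gaussCoshSub w p q) := fun y => by
  simp [gaussCoshSub]

lemma integrable_gaussCoshSub (hw : 0 < w.re) (p q : ℂ) : Integrable (gaussCoshSub w p q) :=
  (integrable_exp_neg_mul_sq_mul_cosh hw p).sub (integrable_exp_neg_mul_sq_mul_cosh hw q)

lemma exp_neg_mul_smul_coshDensity (w p q : ℂ) :
    (fun x : ℝ => cexp (-w * x) • coshDensity p q x) =
      (Set.Ioi 0).indicator fun x => (√x)⁻¹ • gaussCoshSub w p q √x := by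
  funext x
  rcases le_or_gt x 0 with hx | hx
  · rw [coshDensity_of_nonpos hx, smul_zero, Set.indicator_of_notMem (by simpa using hx)]
  · have hsq : (√x : ℂ) ^ 2 = x := mod_cast Real.sq_sqrt hx.le
    rw [Set.indicator_of_mem (Set.mem_Ioi.mpr hx), gaussCoshSub, coshDensity, hsq,
      Complex.real_smul, smul_eq_mul]
    push_cast
    ring

lemma integrable_exp_neg_mul_smul_coshDensity (hw : 0 < w.re) (p q : ℂ) :
    Integrable fun x : ℝ => cexp (-w * x) • coshDensity p q x := by
  rw [exp_neg_mul_smul_coshDensity, integrable_indicator_iff measurableSet_Ioi]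
  exact integrableOn_Ioi_inv_sqrt_smul_comp_sqrt (integrable_gaussCoshSub hw p q).integrableOn

theorem bilateralLaplace_coshDensity (hw : 0 < w.re) (p q : ℂ) :
    bilateralLaplace (coshDensity p q) w =
      √π * vacKernel (p ^ 2 / 4) ((p ^ 2 - q ^ 2) / 4) w := by
  have hgauss : ∫ y, gaussCoshSub w p q y =
      √π * w ^ (-(1 / 2) : ℂ) * (cexp (p ^ 2 / (4 * w)) - cexp (q ^ 2 / (4 * w))) := by
    simp only [gaussCoshSub]
    rw [integral_sub (integrable_exp_neg_mul_sq_mul_cosh hw p)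
      (integrable_exp_neg_mul_sq_mul_cosh hw q), integral_exp_neg_mul_sq_mul_cosh hw,
      integral_exp_neg_mul_sq_mul_cosh hw, mul_sub]
  have hexp : cexp (q ^ 2 / (4 * w)) =
      cexp (p ^ 2 / (4 * w)) * cexp (-((p ^ 2 - q ^ 2) / 4) / w) := by
    rw [← Complex.exp_add]
    ring_nf
  rw [bilateralLaplace, exp_neg_mul_smul_coshDensity, integral_indicator measurableSet_Ioi,
    integral_Ioi_inv_sqrt_smul_comp_sqrt, ← integral_eq_two_smul_integral_Ioi_of_even
      (integrable_gaussCoshSub hw p q) (even_gaussCoshSub w p q), hgauss, hexp, vacKernel,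
    div_div (p ^ 2)]
  ring

theorem integral_exp_mul_vacKernel_verticalLine {γ : ℝ} (hγ : 0 < γ) (p q : ℂ) (x : ℝ) :
    ∫ s : ℝ, cexp ((γ + s * I) * x) *
        vacKernel (p ^ 2 / 4) ((p ^ 2 - q ^ 2) / 4) (γ + s * I) =
      2 * √π * coshDensity p q x := by
  set V := vacKernel (p ^ 2 / 4) ((p ^ 2 - q ^ 2) / 4)
  have hlaplace : ∀ s : ℝ, bilateralLaplace (coshDensity p q) (γ + s * I) =
      √π * V (γ + s * I) := fun s => bilateralLaplace_coshDensity (by simpa using hγ) p q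
  have hinversion := integral_exp_mul_smul_bilateralLaplace
    (integrable_exp_neg_mul_smul_coshDensity (w := γ) (by simpa using hγ) p q)
    (by simpa only [hlaplace] using (integrable_vacKernel_verticalLine _ _ hγ).const_mul _)
    (continuous_coshDensity p q).continuousAt (x := x)
  simp only [hlaplace, smul_eq_mul, mul_left_comm _ (√π : ℂ)] at hinversion
  rw [integral_const_mul] at hinversion
  have hsqrt : (√π : ℂ) * √π = π := mod_cast Real.mul_self_sqrt pi_pos.le
  have hsqrt0 : (√π : ℂ) ≠ 0 := mod_cast (Real.sqrt_pos.mpr pi_pos).ne'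
  refine mul_left_cancel₀ hsqrt0 (hinversion.trans ?_)
  linear_combination (-2 * coshDensity p q x) * hsqrt

end CoshDensity

section SaddlePoint

theorem tendsto_intervalIntegral_of_dominated {E ι : Type*} [NormedAddCommGroup E]
    [NormedSpace ℝ E] {l : Filter ι} [l.IsCountablyGenerated] {F : ι → ℝ → E} {f : ℝ → E}
    {a b : ι → ℝ} {bound : ℝ → ℝ} (ha : Tendsto a l atBot) (hb : Tendsto b l atTop)
    (hmeas : ∀ᶠ i in l, AEStronglyMeasurable (F i))
    (hbound : ∀ᶠ i in l, ∀ u ∈ Set.Ioc (a i) (b i), ‖F i u‖ ≤ bound u)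
    (hbound_int : Integrable bound) (hbound_nonneg : 0 ≤ bound)
    (hlim : ∀ u, Tendsto (F · u) l (𝓝 (f u))) :
    Tendsto (fun i => ∫ u in a i..b i, F i u) l (𝓝 (∫ u, f u)) := by
  have hindicator : Tendsto (fun i => ∫ u, (Set.Ioc (a i) (b i)).indicator (F i) u) l
      (𝓝 (∫ u, f u)) := by
    refine tendsto_integral_filter_of_dominated_convergence bound
      (hmeas.mono fun i hi => hi.indicator measurableSet_Ioc) ?_ hbound_int
      (.of_forall fun u => (hlim u).congr' ?_)
    · filter_upwards [hbound] with i hi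
      refine .of_forall fun u => ?_
      rw [norm_indicator_eq_indicator_norm]
      exact Set.indicator_apply_le' (hi u) fun _ => hbound_nonneg u
    · filter_upwards [ha.eventually_lt_atBot u, hb.eventually_ge_atTop u] with i hai hbi
      rw [Set.indicator_of_mem (Set.mem_Ioc.mpr ⟨hai, hbi⟩)]
  refine hindicator.congr' ?_
  filter_upwards [ha.eventually_le_atBot 0, hb.eventually_ge_atTop 0] with i hai hbi
  rw [integral_indicator measurableSet_Ioc, intervalIntegral.integral_of_le (hai.trans hbi)]

/- Where `|a u| ≤ 1`, `y` is at least `c u² / 2`; elsewhere it is at least `c / (2 a²)`, whose cube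
dominates `u²` because `a⁶ u² ≤ T²`. -/
lemma cube_mul_sq_le_add_cube {a c T u y : ℝ} (hc : 0 < c) (hu : |a ^ 3 * u| ≤ T)
    (hy : y = c * u ^ 2 / (1 + (a * u) ^ 2)) :
    c ^ 3 * u ^ 2 ≤ 2 * c ^ 2 * y + 8 * T ^ 2 * y ^ 3 := by
  have hy0 : 0 ≤ y := hy ▸ by positivity
  have hy_mul : y * (1 + (a * u) ^ 2) = c * u ^ 2 := hy ▸ div_mul_cancel₀ _ (by positivity)
  rcases le_total ((a * u) ^ 2) 1 with hsmall | hlarge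
  · have hcu : c * u ^ 2 ≤ 2 * y := by nlinarith
    calc c ^ 3 * u ^ 2 = c ^ 2 * (c * u ^ 2) := by ring
      _ ≤ c ^ 2 * (2 * y) := by gcongr
      _ ≤ 2 * c ^ 2 * y + 8 * T ^ 2 * y ^ 3 := by
        linarith [show 0 ≤ 8 * T ^ 2 * y ^ 3 by positivity]
  · have hu0 : u ≠ 0 := by
      rintro rfl
      norm_num at hlarge
    have hcy : c ≤ 2 * a ^ 2 * y := by
      refine le_of_mul_le_mul_right ?_ (show 0 < u ^ 2 by positivity)
      nlinarith
    calc c ^ 3 * u ^ 2 ≤ (2 * a ^ 2 * y) ^ 3 * u ^ 2 := by gcongr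
      _ = 8 * |a ^ 3 * u| ^ 2 * y ^ 3 := by
        rw [sq_abs]
        ring
      _ ≤ 8 * T ^ 2 * y ^ 3 := by gcongr
      _ ≤ 2 * c ^ 2 * y + 8 * T ^ 2 * y ^ 3 := by
        linarith [show 0 ≤ 2 * c ^ 2 * y by positivity]

lemma one_add_sq_le_mul_exp {a c T u : ℝ} (hc : 0 < c) (hu : |a ^ 3 * u| ≤ T) :
    1 + u ^ 2 ≤ (1 + 2 / c + 48 * T ^ 2 / c ^ 3) * rexp (c * u ^ 2 / (1 + (a * u) ^ 2)) := by
  set y := c * u ^ 2 / (1 + (a * u) ^ 2) with hy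
  have hy0 : 0 ≤ y := by positivity
  have hexp_one : 1 ≤ rexp y := Real.one_le_exp hy0
  have hexp_self : y ≤ rexp y := by linarith [Real.add_one_le_exp y]
  have hexp_cube : y ^ 3 ≤ 6 * rexp y := by
    have := Real.pow_div_factorial_le_exp y hy0 3
    rwa [div_le_iff₀' (by positivity)] at this
  calc 1 + u ^ 2 = 1 + c ^ 3 * u ^ 2 / c ^ 3 := by field_simp
    _ ≤ rexp y + (2 * c ^ 2 * rexp y + 8 * T ^ 2 * (6 * rexp y)) / c ^ 3 := by
      gcongr
      exact (cube_mul_sq_le_add_cube hc hu hy).trans (by gcongr)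
    _ = (1 + 2 / c + 48 * T ^ 2 / c ^ 3) * rexp y := by
      field_simp
      ring

lemma norm_exp_neg_mul_sq_div (a c u : ℝ) :
    ‖cexp (-(c * u ^ 2) / (1 + a * u * I))‖ = rexp (-(c * u ^ 2 / (1 + (a * u) ^ 2))) := by
  rw [Complex.norm_exp, Complex.div_re]
  simp [Complex.normSq_apply, pow_two, neg_div]

lemma norm_exp_neg_mul_sq_div_le {a c T u : ℝ} (hc : 0 < c) (hu : |a ^ 3 * u| ≤ T) :
    ‖cexp (-(c * u ^ 2) / (1 + a * u * I))‖ ≤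
      (1 + 2 / c + 48 * T ^ 2 / c ^ 3) * (1 + u ^ 2)⁻¹ := by
  rw [norm_exp_neg_mul_sq_div, Real.exp_neg, ← div_eq_mul_inv, le_div_iff₀ (by positivity),
    inv_mul_le_iff₀ (by positivity), mul_comm]
  exact one_add_sq_le_mul_exp hc hu

theorem tendsto_integral_mul_exp_neg_mul_sq_div {ι : Type*} {l : Filter ι}
    [l.IsCountablyGenerated] {a : ι → ℝ} {φ : ι → ℝ → ℂ} {c T M : ℝ} {L : ℂ} (hc : 0 < c)
    (hT : 0 < T) (hM : 0 ≤ M) (ha : Tendsto a l (𝓝[>] 0))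
    (hmeas : ∀ᶠ i in l, AEStronglyMeasurable (φ i)) (hbound : ∀ᶠ i in l, ∀ u, ‖φ i u‖ ≤ M)
    (hφ : ∀ u, Tendsto (φ · u) l (𝓝 L)) :
    Tendsto (fun i => ∫ u in -(T / a i ^ 3)..T / a i ^ 3,
      φ i u * cexp (-(c * u ^ 2) / (1 + a i * u * I))) l (𝓝 (L * √(π / c))) := by
  have ha_pos : ∀ᶠ i in l, 0 < a i := (tendsto_nhdsWithin_iff.mp ha).2
  have ha_zero : Tendsto a l (𝓝 0) := ha.mono_right nhdsWithin_le_nhds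
  have hcube : Tendsto (fun i => a i ^ 3) l (𝓝[>] 0) :=
    tendsto_nhdsWithin_iff.mpr
      ⟨by simpa using ha_zero.pow 3, ha_pos.mono fun i hi => pow_pos hi 3⟩
  have hend : Tendsto (fun i => T / a i ^ 3) l atTop :=
    hcube.inv_tendsto_nhdsGT_zero.const_mul_atTop hT
  have hgauss : ∫ u : ℝ, L * cexp (-(c * u ^ 2)) = L * √(π / c) := by
    rw [integral_const_mul, ← integral_gaussian, ← integral_complex_ofReal]
    push_cast
    simp only [neg_mul]
  have hexp_cont : ∀ i, Continuous fun u : ℝ => cexp (-(c * u ^ 2) / (1 + a i * u * I)) :=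
    fun i => by
      have hne : ∀ u : ℝ, (1 + a i * u * I : ℂ) ≠ 0 :=
        fun u => Complex.ne_zero_of_re_pos (by simp)
      fun_prop (disch := assumption)
  rw [← hgauss]
  refine tendsto_intervalIntegral_of_dominated (tendsto_neg_atTop_atBot.comp hend) hend
    (hmeas.mono fun i hi => hi.mul (hexp_cont i).aestronglyMeasurable)
    (bound := fun u => M * ((1 + 2 / c + 48 * T ^ 2 / c ^ 3) * (1 + u ^ 2)⁻¹)) ?_
    ((integrable_inv_one_add_sq.const_mul _).const_mul _) (fun u => by positivity)
    fun u => (hφ u).mul ?_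
  · filter_upwards [hbound, ha_pos] with i hi hai u hu
    have hu_le : |a i ^ 3 * u| ≤ T := by
      rw [abs_mul, abs_of_pos (pow_pos hai 3), ← le_div_iff₀' (by positivity)]
      exact abs_le.mpr ⟨hu.1.le, hu.2⟩
    rw [norm_mul]
    gcongr
    exacts [hi u, norm_exp_neg_mul_sq_div_le hc hu_le]
  · have hdenom : Tendsto (fun i => (1 + a i * u * I : ℂ)) l (𝓝 1) := by
      simpa using ((ha_zero.ofReal.mul_const (u : ℂ)).mul_const I).const_add (1 : ℂ)
    simpa using ((tendsto_const_nhds (x := (-(c * u ^ 2) : ℂ))).div hdenom one_ne_zero).cexp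

/-- The factor of `e^{z(N+x)} vacKernel c d z` that varies slowly near the saddle point `z = a²`,
in the variable `v = z / a²`. -/
def saddleAmplitude (d a x : ℝ) (v : ℂ) : ℂ :=
  v ^ (-(1 / 2) : ℂ) * (1 - cexp (-d / (a ^ 2 * v))) * cexp (a ^ 2 * v * x)

lemma norm_saddleAmplitude_le {d a x R : ℝ} {v : ℂ} (hd : 0 < d) (ha : 0 < a) (ha_one : a ≤ 1)
    (hx : |x| ≤ R) (hv : v.re = 1) : ‖saddleAmplitude d a x v‖ ≤ 2 * rexp R := by
  have hpow : ‖v ^ (-(1 / 2) : ℂ)‖ ≤ 1 := by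
    rw [norm_cpow_neg_half]
    exact Real.rpow_le_one_of_one_le_of_nonpos (hv ▸ Complex.re_le_norm v) (by norm_num)
  have hre : ((a ^ 2 * v : ℂ)).re = a ^ 2 := by
    rw [← Complex.ofReal_pow, Complex.re_ofReal_mul, hv, mul_one]
  have hsub : ‖1 - cexp (-d / (a ^ 2 * v))‖ ≤ 2 := by
    have := norm_exp_neg_div_le_one hd (z := a ^ 2 * v) (by rw [hre]; positivity)
    linarith [norm_sub_le 1 (cexp (-d / (a ^ 2 * v))), norm_one (α := ℂ)]
  have hexp : ‖cexp (a ^ 2 * v * x)‖ ≤ rexp R := by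
    rw [Complex.norm_exp, Complex.re_mul_ofReal, hre, Real.exp_le_exp]
    calc a ^ 2 * x ≤ a ^ 2 * |x| := by gcongr; exact le_abs_self x
      _ ≤ 1 * R := by gcongr; exact pow_le_one₀ ha.le ha_one
      _ = R := one_mul R
  rw [saddleAmplitude, norm_mul, norm_mul]
  calc _ ≤ 1 * 2 * rexp R := by gcongr
    _ = 2 * rexp R := by ring

lemma continuousAt_saddleAmplitude (d x : ℝ) {a : ℝ} {v : ℂ} (ha : a ≠ 0) (hv : 0 < v.re) :
    ContinuousAt (saddleAmplitude d a x) v := by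
  have hslit : v ∈ Complex.slitPlane := .inl hv
  have hav : (a ^ 2 * v : ℂ) ≠ 0 :=
    mul_ne_zero (mod_cast pow_ne_zero 2 ha) (Complex.ne_zero_of_re_pos hv)
  unfold saddleAmplitude
  fun_prop (disch := assumption)

lemma tendsto_saddleAmplitude {ι : Type*} {l : Filter ι} {a x : ι → ℝ} {v : ι → ℂ} {d R : ℝ}
    (hd : 0 < d) (ha : Tendsto a l (𝓝[>] 0)) (hx : ∀ᶠ i in l, |x i| ≤ R)
    (hv : Tendsto v l (𝓝 1)) :
    Tendsto (fun i => saddleAmplitude d (a i) (x i) (v i)) l (𝓝 1) := by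
  have ha_pos : ∀ᶠ i in l, 0 < a i := (tendsto_nhdsWithin_iff.mp ha).2
  have ha_zero : Tendsto a l (𝓝 0) := ha.mono_right nhdsWithin_le_nhds
  have hpow : Tendsto (fun i => v i ^ (-(1 / 2) : ℂ)) l (𝓝 1) := by
    simpa using hv.cpow (tendsto_const_nhds (x := (-(1 / 2) : ℂ))) (by simp)
  have hexp_small : Tendsto (fun i => cexp (-d / (a i ^ 2 * v i))) l (𝓝 0) := by
    rw [Complex.tendsto_exp_nhds_zero_iff]
    have hsq : Tendsto (fun i => a i ^ 2) l (𝓝[>] 0) := tendsto_nhdsWithin_iff.mpr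
      ⟨by simpa using ha_zero.pow 2, ha_pos.mono fun i hi => pow_pos hi 2⟩
    have hinv_re : Tendsto (fun i => -d * (v i)⁻¹.re) l (𝓝 (-d)) := by
      simpa using (Complex.continuous_re.tendsto _).comp (hv.inv₀ one_ne_zero) |>.const_mul (-d)
    refine (hsq.inv_tendsto_nhdsGT_zero.atTop_mul_neg (neg_neg_of_pos hd) hinv_re).congr fun i => ?_
    have : (-d / (a i ^ 2 * v i) : ℂ) = ((a i ^ 2)⁻¹ * -d : ℝ) * (v i)⁻¹ := by
      push_cast
      rw [div_eq_mul_inv, mul_inv]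
      ring
    rw [this, Complex.re_ofReal_mul, Pi.inv_apply]
    ring
  have hexp_one : Tendsto (fun i => cexp (a i ^ 2 * v i * x i)) l (𝓝 1) := by
    have hzero : Tendsto (fun i => (a i ^ 2 * v i : ℂ)) l (𝓝 0) := by
      simpa using (ha_zero.ofReal.pow 2).mul hv
    have hbdd : IsBoundedUnder (· ≤ ·) l fun i => ‖(x i : ℂ)‖ :=
      isBoundedUnder_of_eventually_le (a := R) (by simpa using hx)
    simpa using (hzero.zero_mul_isBoundedUnder_le hbdd).cexp
  simpa [saddleAmplitude] using (hpow.mul (hexp_small.const_sub 1)).mul hexp_one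

lemma exp_mul_vacKernel_eq_saddleAmplitude {a c d N x u : ℝ} (ha : 0 < a) (hN : a ^ 4 * N = c) :
    cexp ((a ^ 2 + a ^ 3 * u * I) * (N + x)) * vacKernel c d (a ^ 2 + a ^ 3 * u * I) =
      a⁻¹ * rexp (2 * c / a ^ 2) * (saddleAmplitude d a x (1 + a * u * I) *
        cexp (-(c * u ^ 2) / (1 + a * u * I))) := by
  have ha0 : (a : ℂ) ≠ 0 := mod_cast ha.ne'
  set v : ℂ := 1 + a * u * I with hv_def
  have hv_re : 0 < v.re := by simp [v]
  have hv0 : v ≠ 0 := Complex.ne_zero_of_re_pos hv_re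
  have hz : (a ^ 2 + a ^ 3 * u * I : ℂ) = (a ^ 2 : ℝ) * v := by
    push_cast
    ring
  have hcpow : ((a ^ 2 : ℝ) * v : ℂ) ^ (-(1 / 2) : ℂ) = (a⁻¹ : ℝ) * v ^ (-(1 / 2) : ℂ) := by
    rw [mul_cpow_of_re_pos (by simpa only [Complex.ofReal_re] using pow_pos ha 2) hv_re,
      Complex.cpow_neg, ofReal_cpow_half (by positivity), Real.sqrt_sq ha.le, Complex.ofReal_inv]
  have hexponent : ((a ^ 2 : ℝ) * v * N + c / ((a ^ 2 : ℝ) * v) : ℂ) =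
      (2 * c / a ^ 2 : ℝ) + -(c * u ^ 2) / v := by
    have hsq : v ^ 2 = 2 * v - 1 - a ^ 2 * u ^ 2 := by
      linear_combination (v - 1 + a * u * I) * hv_def + a ^ 2 * u ^ 2 * Complex.I_sq
    rw [← hN]
    push_cast
    field_simp
    linear_combination N * hsq
  rw [hz, vacKernel, hcpow, saddleAmplitude, Complex.ofReal_exp]
  calc _ = a⁻¹ * v ^ (-(1 / 2) : ℂ) * (1 - cexp (-d / ((a ^ 2 : ℝ) * v))) *
        cexp ((a ^ 2 : ℝ) * v * x) * cexp ((a ^ 2 : ℝ) * v * N + c / ((a ^ 2 : ℝ) * v)) := by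
        rw [mul_add, Complex.exp_add, Complex.exp_add]
        ring
    _ = _ := by
        rw [hexponent, Complex.exp_add]
        push_cast
        ring

lemma integral_exp_mul_vacKernel_eq_integral_saddleAmplitude {a c d N x T : ℝ} (ha : 0 < a)
    (hN : a ^ 4 * N = c) :
    ∫ t in -T..T, cexp ((a ^ 2 + t * I) * (N + x)) * vacKernel c d (a ^ 2 + t * I) =
      a ^ 2 * rexp (2 * c / a ^ 2) * ∫ u in -(T / a ^ 3)..T / a ^ 3,
        saddleAmplitude d a x (1 + a * u * I) * cexp (-(c * u ^ 2) / (1 + a * u * I)) := by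
  have ha3 : a ^ 3 ≠ 0 := by positivity
  have hsubst := intervalIntegral.smul_integral_comp_mul_left (a := -(T / a ^ 3)) (b := T / a ^ 3)
    (fun t : ℝ => cexp ((a ^ 2 + t * I) * (N + x)) * vacKernel c d (a ^ 2 + t * I)) (a ^ 3)
  rw [mul_neg, mul_div_cancel₀ T ha3] at hsubst
  rw [← hsubst]
  simp only [Complex.ofReal_mul, Complex.ofReal_pow, exp_mul_vacKernel_eq_saddleAmplitude ha hN]
  have hfactor : ((a ^ 3 : ℝ) * (a⁻¹ * rexp (2 * c / a ^ 2)) : ℂ) =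
      a ^ 2 * rexp (2 * c / a ^ 2) := by
    have ha0 : (a : ℂ) ≠ 0 := mod_cast ha.ne'
    push_cast
    field_simp
  rw [intervalIntegral.integral_const_mul, Complex.real_smul, ← mul_assoc, hfactor]

lemma sqrt_mul_exp_mul_integral_vacKernel {a c d N x T : ℝ} (hc : 0 < c) (hN : 0 < N)
    (ha : 0 < a) (ha_sq : a ^ 2 = √(c / N)) :
    (√N * rexp (-(2 * √(c * N))) : ℝ) * ∫ t in -T..T, cexp ((√(c / N) + t * I) * (N + x)) *
        vacKernel c d (√(c / N) + t * I) =
      √c * ∫ u in -(T / a ^ 3)..T / a ^ 3,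
        saddleAmplitude d a x (1 + a * u * I) * cexp (-(c * u ^ 2) / (1 + a * u * I)) := by
  have hscale : √N * a ^ 2 = √c := by
    rw [ha_sq, ← Real.sqrt_mul hN.le, mul_div_cancel₀ _ hN.ne']
  have hscale_sq : a ^ 4 * N = c := by
    rw [← Real.sq_sqrt hN.le, ← Real.sq_sqrt hc.le, ← hscale]
    ring
  have hexponent : 2 * c / a ^ 2 = 2 * √(c * N) := by
    rw [Real.sqrt_mul hc.le, div_eq_iff (by positivity), mul_assoc, mul_assoc, hscale,
      Real.mul_self_sqrt hc.le]
  have hcoeff : √N * rexp (-(2 * √(c * N))) * (a ^ 2 * rexp (2 * √(c * N))) = √c := by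
    rw [mul_mul_mul_comm, hscale, ← Real.exp_add, neg_add_cancel, Real.exp_zero, mul_one]
  rw [← ha_sq, Complex.ofReal_pow,
    integral_exp_mul_vacKernel_eq_integral_saddleAmplitude ha hscale_sq, hexponent, ← mul_assoc,
    ← hcoeff]
  push_cast
  rfl

theorem tendsto_sqrt_mul_exp_mul_integral_vacKernel {ι : Type*} {l : Filter ι}
    [l.IsCountablyGenerated] {N x : ι → ℝ} {c d T R : ℝ} (hc : 0 < c) (hd : 0 < d) (hT : 0 < T)
    (hN : Tendsto N l atTop) (hx : ∀ᶠ i in l, |x i| ≤ R) :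
    Tendsto (fun i => (√(N i) * rexp (-(2 * √(c * N i))) : ℝ) *
      ∫ t in -T..T, cexp ((√(c / N i) + t * I) * (N i + x i)) *
        vacKernel c d (√(c / N i) + t * I)) l (𝓝 √π) := by
  have hN_pos : ∀ᶠ i in l, 0 < N i := hN.eventually_gt_atTop 0
  set a : ι → ℝ := fun i => √√(c / N i)
  have ha : Tendsto a l (𝓝[>] 0) := by
    refine tendsto_nhdsWithin_iff.mpr ⟨?_, ?_⟩
    · simpa using (hN.const_div_atTop c).sqrt.sqrt
    · filter_upwards [hN_pos] with i hi
      exact Real.sqrt_pos.mpr (Real.sqrt_pos.mpr (by positivity))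
  have ha_pos : ∀ᶠ i in l, 0 < a i := (tendsto_nhdsWithin_iff.mp ha).2
  have ha_zero : Tendsto a l (𝓝 0) := ha.mono_right nhdsWithin_le_nhds
  have hsaddle := tendsto_integral_mul_exp_neg_mul_sq_div (c := c) (T := T) (M := 2 * rexp R)
    (φ := fun i u => saddleAmplitude d (a i) (x i) (1 + a i * u * I)) hc hT (by positivity) ha
    ?_ ?_ fun u => tendsto_saddleAmplitude hd ha hx ?_
  · have hlim : (√c * (1 * √(π / c)) : ℂ) = √π := by
      rw [one_mul]
      norm_cast
      rw [← Real.sqrt_mul hc.le, mul_div_cancel₀ _ hc.ne']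
    rw [← hlim]
    refine (hsaddle.const_mul (√c : ℂ)).congr' ?_
    filter_upwards [hN_pos, ha_pos] with i hNi hai
    exact (sqrt_mul_exp_mul_integral_vacKernel hc hNi hai
      (Real.sq_sqrt (Real.sqrt_nonneg _))).symm
  · filter_upwards [ha_pos] with i hi
    refine (continuous_iff_continuousAt.mpr fun u => ?_).aestronglyMeasurable
    exact ContinuousAt.comp (f := fun u : ℝ => (1 + a i * u * I : ℂ))
      (continuousAt_saddleAmplitude d (x i) hi.ne' (by simp)) (by fun_prop)
  · filter_upwards [ha_pos, hx, ha_zero.eventually_le_const one_pos] with i hi hxi hi_one u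
    exact norm_saddleAmplitude_le hd hi hi_one hxi (by simp)
  · simpa using ((ha_zero.ofReal.mul_const (u : ℂ)).mul_const I).const_add (1 : ℂ)

end SaddlePoint

section Density

/-- The growth rate `4π√(A-1)` of the second `cosh` in `ρ_c`, read as `4πi√(1-A)` for `A < 1`;
since `√` of a negative real is `0`, at most one of the two summands is nonzero. -/
def secondaryRate (A : ℝ) : ℂ :=
  4 * π * (√(A - 1) + √(1 - A) * I)

lemma secondaryRate_of_one_le {A : ℝ} (hA : 1 ≤ A) :
    secondaryRate A = (4 * π * √(A - 1) : ℝ) := by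
  simp [secondaryRate, Real.sqrt_eq_zero_of_nonpos (sub_nonpos.mpr hA)]

lemma secondaryRate_of_le_one {A : ℝ} (hA : A ≤ 1) :
    secondaryRate A = (4 * π * √(1 - A) : ℝ) * I := by
  simp [secondaryRate, Real.sqrt_eq_zero_of_nonpos (sub_nonpos.mpr hA), mul_assoc]

lemma secondaryRate_sq (A : ℝ) : secondaryRate A ^ 2 = 16 * π ^ 2 * (A - 1) := by
  rcases le_total 1 A with hA | hA
  · rw [secondaryRate_of_one_le hA, ← Complex.ofReal_pow, mul_pow,
      Real.sq_sqrt (sub_nonneg.mpr hA)]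
    push_cast
    ring
  · rw [secondaryRate_of_le_one hA, mul_pow, Complex.I_sq, ← Complex.ofReal_pow, mul_pow,
      Real.sq_sqrt (sub_nonneg.mpr hA)]
    push_cast
    ring

lemma cosh_secondaryRate_mul_sqrt (A : ℝ) {x : ℝ} (hx : 0 ≤ x) :
    Complex.cosh (secondaryRate A * √x) =
      (if 1 ≤ A then Real.cosh (4 * π * √((A - 1) * x))
        else Real.cos (4 * π * √((1 - A) * x)) : ℝ) := by
  rw [Real.sqrt_mul' _ hx, Real.sqrt_mul' _ hx, ← mul_assoc, ← mul_assoc]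
  split_ifs with hA
  · rw [secondaryRate_of_one_le hA, ← Complex.ofReal_mul, Complex.ofReal_cosh]
  · rw [secondaryRate_of_le_one (not_le.mp hA).le, mul_right_comm, Complex.cosh_mul_I,
      ← Complex.ofReal_mul, Complex.ofReal_cos]

lemma ofReal_rhoc (A h : ℝ) :
    (rhoc A h : ℂ) = √2 * coshDensity (4 * π * √A) (secondaryRate A) (h - A) := by
  rw [rhoc]
  rcases le_or_gt h A with hle | hlt
  · rw [if_pos hle, coshDensity_of_nonpos (sub_nonpos.mpr hle), mul_zero, Complex.ofReal_zero]
  · have hx : 0 ≤ h - A := sub_nonneg.mpr hlt.le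
    have hcosh : (Real.cosh (4 * π * √(A * (h - A))) : ℂ) =
        Complex.cosh (4 * π * √A * √(h - A)) := by
      rw [Real.sqrt_mul' _ hx, ← mul_assoc]
      push_cast
      rfl
    rw [if_neg hlt.not_ge, coshDensity, cosh_secondaryRate_mul_sqrt A hx, Complex.ofReal_mul,
      Complex.ofReal_sub, hcosh, Real.sqrt_div zero_le_two, Complex.ofReal_div]
    ring

lemma continuous_ofReal_rhoc (A : ℝ) : Continuous fun h => (rhoc A h : ℂ) := by
  simp only [ofReal_rhoc]
  exact continuous_const.mul ((continuous_coshDensity _ _).comp (continuous_sub_right A))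

lemma integral_exp_mul_vacKernel_eq_rhoc {A γ : ℝ} (hA : 0 ≤ A) (hγ : 0 < γ) (h : ℝ) :
    ∫ s : ℝ, cexp ((γ + s * I) * (h - A)) * vacKernel (4 * π ^ 2 * A) (4 * π ^ 2) (γ + s * I) =
      √(2 * π) * rhoc A h := by
  have hrate : (4 * π * √A : ℂ) ^ 2 = 16 * π ^ 2 * A := by
    rw [mul_pow, ← Complex.ofReal_pow √A, Real.sq_sqrt hA]
    ring
  have hc : (4 * π * √A : ℂ) ^ 2 / 4 = 4 * π ^ 2 * A := by
    rw [hrate]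
    ring
  have hd : ((4 * π * √A : ℂ) ^ 2 - secondaryRate A ^ 2) / 4 = 4 * π ^ 2 := by
    rw [hrate, secondaryRate_sq]
    ring
  have hbromwich :=
    integral_exp_mul_vacKernel_verticalLine hγ (4 * π * √A) (secondaryRate A) (h - A)
  have hsqrt : (√2 : ℂ) * √2 = 2 := mod_cast Real.mul_self_sqrt zero_le_two
  rw [hc, hd, Complex.ofReal_sub] at hbromwich
  rw [hbromwich, ofReal_rhoc, Real.sqrt_mul zero_le_two, Complex.ofReal_mul]
  linear_combination -(√π * coshDensity (4 * π * √A) (secondaryRate A) (h - A)) * hsqrt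

end Density

section Factorization

lemma zline_re (A : ℝ) (J : ℤ) (t : ℝ) : (zline A J t).re = 2 * π * √(A / J) := by
  rw [zline, Complex.add_re, Complex.ofReal_re, Complex.re_ofReal_mul, Complex.I_re, mul_zero,
    add_zero]

lemma integral_intervalIntegral_mul_comp_sub {f g : ℝ → ℂ} {a b : ℝ} (hab : a ≤ b)
    (hf : IntegrableOn f (Set.Ioc a b)) (hg : Integrable g) :
    ∫ s, ∫ t in a..b, f t * g (s - t) = (∫ t in a..b, f t) * ∫ s, g s := by
  simp only [intervalIntegral.integral_of_le hab]
  exact integral_convolution (ContinuousLinearMap.mul ℂ ℂ) hf hg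

/-- The integral over the `J`-conjugate variable `z` that remains after `D_vac` has been factored
into its two chiral halves. -/
def chiralIntegral (A : ℝ) (J : ℤ) (h : ℝ) : ℂ :=
  ∫ t in -π..π, cexp (zline A J t * (J + (h - A))) *
    vacKernel (4 * π ^ 2 * A) (4 * π ^ 2) (zline A J t)

lemma sqrt_four_mul_pi_sq : √(4 * π ^ 2) = 2 * π := by
  rw [show 4 * π ^ 2 = (2 * π) ^ 2 by ring, Real.sqrt_sq (by positivity)]

lemma Fvac_integrand_eq {z w : ℂ} (hz : 0 < z.re) (hw : 0 < w.re) (A : ℝ) (J : ℤ) :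
    cexp (z * J) * ((4 * (π : ℂ) ^ 2) / (z * w)) ^ ((1 : ℂ) / 2) *
        cexp ((4 * π ^ 2 * A) / w + (4 * π ^ 2 * A) / z) * (1 - cexp (-(4 * π ^ 2) / w)) *
        (1 - cexp (-(4 * π ^ 2) / z)) =
      2 * π * (cexp (z * J) * vacKernel (4 * π ^ 2 * A) (4 * π ^ 2) z *
        vacKernel (4 * π ^ 2 * A) (4 * π ^ 2) w) := by
  have hcpow : ((4 * (π : ℂ) ^ 2) / (z * w)) ^ ((1 : ℂ) / 2) =
      2 * π * z ^ (-(1 / 2) : ℂ) * w ^ (-(1 / 2) : ℂ) := by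
    have := ofReal_div_mul_cpow_half (r := 4 * π ^ 2) (by positivity) hz hw
    rw [sqrt_four_mul_pi_sq] at this
    exact_mod_cast this
  rw [hcpow, Complex.exp_add, vacKernel, vacKernel]
  ring

lemma Fvac_mul_exp_eq_integral {A : ℝ} {J : ℤ} (hA : 0 < A) (hJ : 0 < J) {βL : ℂ}
    (hβL : 2 * π * √(A / J) < βL.re) (x : ℂ) :
    Fvac A βL J * cexp (βL * x) =
      ∫ t in -π..π, cexp (zline A J t * (J + x)) *
          vacKernel (4 * π ^ 2 * A) (4 * π ^ 2) (zline A J t) *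
        (cexp ((βL - zline A J t) * x) *
          vacKernel (4 * π ^ 2 * A) (4 * π ^ 2) (βL - zline A J t)) := by
  rw [Fvac, ← intervalIntegral.integral_mul_const]
  refine intervalIntegral.integral_congr fun t _ => ?_
  have hz : 0 < (zline A J t).re := by
    rw [zline_re]
    positivity
  have hw : 0 < (βL - zline A J t).re := by
    rwa [Complex.sub_re, zline_re, sub_pos]
  have hexp : cexp (zline A J t * J) * cexp (βL * x) =
      cexp (zline A J t * (J + x)) * cexp ((βL - zline A J t) * x) := by
    rw [← Complex.exp_add, ← Complex.exp_add]
    ring_nf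
  have hpi : ((1 / (2 * π) : ℝ) * (2 * π) : ℂ) = 1 := by
    norm_cast
    exact one_div_mul_cancel (by positivity)
  simp only [Fvac_integrand_eq hz hw, Complex.real_smul]
  set V := vacKernel (4 * π ^ 2 * A) (4 * π ^ 2)
  linear_combination V (zline A J t) * V (βL - zline A J t) *
    (cexp (zline A J t * J) * cexp (βL * x) * hpi + hexp)

theorem Dvac_eq_chiralIntegral_mul_rhoc {A β : ℝ} {J : ℤ} (hA : 0 < A) (hJ : 0 < J)
    (hJβ : 2 * π * √(A / J) < β) (h : ℝ) :
    Dvac A β J h = chiralIntegral A J h / √(2 * π) * rhoc A h := by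
  set V := vacKernel (4 * π ^ 2 * A) (4 * π ^ 2) with hV
  set α := 2 * π * √(A / J) with hα_def
  have hα : 0 < α := by positivity
  have hγ : 0 < β - α := sub_pos.mpr hJβ
  let f : ℝ → ℂ := fun t => cexp (zline A J t * (J + (h - A))) * V (zline A J t)
  let g : ℝ → ℂ := fun s => cexp (((β - α : ℝ) + s * I) * (h - A)) * V ((β - α : ℝ) + s * I)
  have hf : Continuous f :=
    Continuous.mul (by unfold zline; fun_prop) (continuous_vacKernel_verticalLine _ _ hα)
  have hg : Integrable g := by
    simpa only [Complex.ofReal_sub h] using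
      integrable_exp_mul_vacKernel_verticalLine (4 * π ^ 2 * A) (4 * π ^ 2) hγ (h - A)
  have hconv : ∀ s : ℝ, Fvac A (β + s * I) J * cexp ((β + s * I) * (h - A)) =
      ∫ t in -π..π, f t * g (s - t) := by
    intro s
    have hline : ∀ t : ℝ, β + s * I - zline A J t = (β - α : ℝ) + (s - t : ℝ) * I := by
      intro t
      rw [zline, ← hα_def]
      push_cast
      ring
    rw [Fvac_mul_exp_eq_integral hA hJ (by simpa using hJβ)]
    simp only [hline, ← hV, f, g]
  have hchiral : ∫ t in -π..π, f t = chiralIntegral A J h := rfl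
  have hcoeff : ((1 / (2 * π) : ℝ) * √(2 * π) : ℂ) = 1 / √(2 * π) := by
    norm_cast
    rw [div_mul_eq_mul_div, one_mul, Real.sqrt_div_self']
  rw [Dvac]
  simp only [hconv]
  rw [integral_smul, integral_intervalIntegral_mul_comp_sub (by linarith [pi_pos])
    hf.integrableOn_Ioc hg, integral_exp_mul_vacKernel_eq_rhoc hA.le hγ, hchiral,
    Complex.real_smul]
  linear_combination chiralIntegral A J h * rhoc A h * hcoeff

end Factorization

section Limit

lemma sqrt_mul_exp_mul_chiralIntegral (A : ℝ) (J : ℤ) (h : ℝ) :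
    ((√(2 * J) * rexp (-(4 * π * √(A * J))) : ℝ) : ℂ) * (chiralIntegral A J h / √(2 * π)) =
      (√J * rexp (-(2 * √(4 * π ^ 2 * A * J))) : ℝ) *
        (∫ t in -π..π, cexp ((√(4 * π ^ 2 * A / J) + t * I) * ((J : ℝ) + (h - A : ℝ))) *
          vacKernel (4 * π ^ 2 * A : ℝ) (4 * π ^ 2 : ℝ) (√(4 * π ^ 2 * A / J) + t * I)) / √π := by
  have hsqrt : ∀ x, √(4 * π ^ 2 * x) = 2 * π * √x := fun x => by
    rw [Real.sqrt_mul (by positivity), sqrt_four_mul_pi_sq]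
  have hintegral : ∫ t in -π..π, cexp ((√(4 * π ^ 2 * A / J) + t * I) *
      ((J : ℝ) + (h - A : ℝ))) * vacKernel (4 * π ^ 2 * A : ℝ) (4 * π ^ 2 : ℝ)
        (√(4 * π ^ 2 * A / J) + t * I) = chiralIntegral A J h := by
    rw [mul_div_assoc, hsqrt, chiralIntegral]
    push_cast [zline]
    rfl
  have hexponent : 2 * √(4 * π ^ 2 * A * J) = 4 * π * √(A * J) := by
    rw [mul_assoc, hsqrt]
    ring
  have hsqrt_two : (√2 : ℂ) ≠ 0 := by simp
  rw [hintegral, hexponent, Real.sqrt_mul zero_le_two, Real.sqrt_mul zero_le_two]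
  push_cast
  field_simp

theorem tendstoUniformlyOn_sqrt_mul_exp_mul_chiralIntegral {A : ℝ} (hA : 0 < A) (a b : ℝ) :
    TendstoUniformlyOn (fun (J : ℤ) (h : ℝ) =>
      ((√(2 * J) * rexp (-(4 * π * √(A * J))) : ℝ) : ℂ) * (chiralIntegral A J h / √(2 * π)))
      (fun _ => 1) atTop (Set.Icc a b) := by
  have hbounded : ∀ᶠ i : ℤ × ℝ in atTop ×ˢ 𝓟 (Set.Icc a b),
      |i.2 - A| ≤ max |a - A| |b - A| := by
    filter_upwards [tendsto_snd.eventually (mem_principal_self (Set.Icc a b))] with i hi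
    exact abs_le_max_abs_abs (sub_le_sub_right hi.1 A) (sub_le_sub_right hi.2 A)
  have hsaddle := (tendsto_sqrt_mul_exp_mul_integral_vacKernel (c := 4 * π ^ 2 * A)
    (d := 4 * π ^ 2) (by positivity) (by positivity) pi_pos
    ((tendsto_intCast_atTop_atTop (R := ℝ)).comp tendsto_fst) hbounded).div_const (√π : ℂ)
  have hpi : (√π : ℂ) ≠ 0 := mod_cast (Real.sqrt_pos.mpr pi_pos).ne'
  rw [div_self hpi] at hsaddle
  rw [← tendsto_prod_principal_iff]
  exact hsaddle.congr fun i => (sqrt_mul_exp_mul_chiralIntegral A i.1 i.2).symm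

end Limit

/-- Proposition: `√(2J) e^(-4π√(AJ)) D_vac^β(J,·)` converges to `ρ_c` uniformly on any
compact interval. -/
theorem Dvac_tendsto_rhoc_uniformly
    (A β : ℝ) (hA : 0 < A) (hβ : 0 < β) (a b : ℝ) :
    TendstoUniformlyOn
      (fun (J : ℤ) (h : ℝ) =>
        ((Real.sqrt (2 * (J : ℝ)) * Real.exp (-(4 * π * Real.sqrt (A * (J : ℝ)))) : ℝ) : ℂ) *
          Dvac A β J h)
      (fun h => ((rhoc A h : ℝ) : ℂ)) atTop (Set.Icc a b) := by
  have hα : ∀ᶠ J : ℤ in atTop, 2 * π * √(A / J) < β := by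
    have hα_zero : Tendsto (fun J : ℤ => 2 * π * √(A / J)) atTop (𝓝 0) := by
      simpa using (tendsto_intCast_atTop_atTop.const_div_atTop A).sqrt.const_mul (2 * π)
    exact hα_zero.eventually_lt_const hβ
  have hchiral := tendstoUniformlyOn_sqrt_mul_exp_mul_chiralIntegral hA a b
  have hrhoc : TendstoUniformlyOn (fun (_ : ℤ) h => (rhoc A h : ℂ)) (fun h => (rhoc A h : ℂ)) atTop
      (Set.Icc a b) := fun _ hu => .of_forall fun _ _ _ => refl_mem_uniformity hu
  have hproduct := hchiral.tendstoLocallyUniformlyOn.mul₀ hrhoc.tendstoLocallyUniformlyOn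
    continuousOn_const (continuous_ofReal_rhoc A).continuousOn
  rw [tendstoLocallyUniformlyOn_iff_tendstoUniformlyOn_of_compact isCompact_Icc] at hproduct
  refine (hproduct.congr ?_).congr_right fun h _ => one_mul _
  filter_upwards [eventually_gt_atTop 0, hα] with J hJ hJβ h _
  simp only [Dvac_eq_chiralIntegral_mul_rhoc hA hJ hJβ, Pi.mul_apply, mul_assoc]
end
end

section
/- Let (ν_J)_{J∈ℤ} be a spectrum (modular invariance is not assumed). Then for every complex β_L with Re(β_L) > 0, every real α with 0 < α < Re(β_L), and every integer J with |J| ≥ 2, F(β_L, J) = ∫_{−π}^{π} (dt/2π) e^{(α + i·t)·J} · Z̃(β_L − α − i·t, α + i·t). -/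
open MeasureTheory Filter Topology Real

noncomputable section

/-- A spectrum: a family of positive Borel measures on `ℝ`, each supported in
`{h | Tgap < h ∧ Tgap < h + J}`, with finite total Laplace-type sum. -/
def IsSpectrum (Tgap : ℝ) (ν : ℤ → Measure ℝ) : Prop :=
  (∀ J : ℤ, ν J {h : ℝ | ¬ (Tgap < h ∧ Tgap < h + (J : ℝ))} = 0) ∧
  (∀ b b' : ℝ, 0 < b → 0 < b' →
    (∑' J : ℤ, ∫⁻ h : ℝ, ENNReal.ofReal (Real.exp (-b * h - b' * (h + (J : ℝ)))) ∂(ν J)) < ⊤)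

/-- The reduced (Virasoro primary) partition function. -/
def Ztilde (A : ℝ) (ν : ℤ → Measure ℝ) (βL βR : ℂ) : ℂ :=
  Complex.exp ((A : ℂ) * (βL + βR)) *
    ((1 - Complex.exp (-βL)) * (1 - Complex.exp (-βR)) +
      ∑' J : ℤ, ∫ h : ℝ, Complex.exp (-βL * (h : ℂ) - βR * ((h : ℂ) + (J : ℂ))) ∂(ν J))

/-- Modular invariance of the reduced partition function (principal square root). -/
def ModularInvariant (A : ℝ) (ν : ℤ → Measure ℝ) : Prop :=
  ∀ βL βR : ℂ, 0 < βL.re → 0 < βR.re →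
    Ztilde A ν βL βR =
      ((4 * (π : ℂ) ^ 2) / (βL * βR)) ^ ((1 : ℂ) / 2) *
        Ztilde A ν (4 * (π : ℂ) ^ 2 / βL) (4 * (π : ℂ) ^ 2 / βR)

/-- The Laplace transform `F(β_L, J)` of the spin-`J` spectral measure. -/
def Fgen (A : ℝ) (ν : ℤ → Measure ℝ) (βL : ℂ) (J : ℤ) : ℂ :=
  ∫ h : ℝ, Complex.exp (-βL * ((h : ℂ) - (A : ℂ))) ∂(ν J)

/-!
On a line `βL + βR` constant, `Ztilde` is a Laurent series in `exp (-βR)`: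

  `Ztilde A ν (βL - s) s = ∑' K, (exp (A * βL) * vacuumCoeff βL K + Fgen A ν βL K) * exp (-s * K)`.

Convergence is absolute, uniformly on `Re s = α`, so orthogonality of the characters
`t ↦ exp (i t n)` extracts the coefficients. The vacuum contributes only to the coefficients of
index `-1`, `0` and `1`, hence for `2 ≤ |J|` the `J`-th coefficient is `Fgen A ν βL J`.
-/

section CoefficientExtraction

variable (α : ℝ)

lemma norm_exp_add_mul_I_mul_intCast (t : ℝ) (n : ℤ) :
    ‖Complex.exp ((α + t * Complex.I) * n)‖ = Real.exp (α * n) := by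
  simp [Complex.norm_exp]

lemma intervalIntegral_exp_add_mul_I_mul_intCast (n : ℤ) :
    ∫ t in (-π)..π, Complex.exp ((α + t * Complex.I) * n) =
      if n = 0 then 2 * (π : ℂ) else 0 := by
  split_ifs with hn
  · simp [hn, two_mul]
  have hIn : Complex.I * n ≠ 0 := mul_ne_zero Complex.I_ne_zero (Int.cast_ne_zero.mpr hn)
  have hperiodic : Complex.exp (Complex.I * n * π) = Complex.exp (Complex.I * n * (-π : ℝ)) :=
    Complex.exp_eq_exp_iff_exists_int.mpr ⟨n, by push_cast; ring⟩
  calc ∫ t in (-π)..π, Complex.exp ((α + t * Complex.I) * n)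
      = ∫ t in (-π)..π, Complex.exp (α * n) * Complex.exp (Complex.I * n * t) := by
        congr with t
        rw [← Complex.exp_add]
        ring_nf
    _ = 0 := by
        rw [intervalIntegral.integral_const_mul, integral_exp_mul_complex hIn, hperiodic,
          sub_self, zero_div, mul_zero]

variable {α} {c : ℤ → ℂ} {f : ℝ → ℂ}

lemma hasSum_intervalIntegral_exp_mul
    (hf : ∀ t : ℝ, HasSum (fun K : ℤ ↦ c K * Complex.exp (-(α + t * Complex.I) * K)) (f t))
    (J : ℤ) :
    HasSum (fun K : ℤ ↦ ∫ t in (-π)..π, c K * Complex.exp ((α + t * Complex.I) * (J - K : ℤ)))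
      (∫ t in (-π)..π, Complex.exp ((α + t * Complex.I) * J) * f t) := by
  have hsum (t : ℝ) : HasSum
      (fun K : ℤ ↦ c K * Complex.exp ((α + t * Complex.I) * (J - K : ℤ)))
      (Complex.exp ((α + t * Complex.I) * J) * f t) := by
    refine ((hf t).mul_left _).congr_fun fun K ↦ ?_
    rw [mul_left_comm, ← Complex.exp_add]
    push_cast
    ring_nf
  have hnorm (K : ℤ) (t : ℝ) : ‖c K * Complex.exp ((α + t * Complex.I) * (J - K : ℤ))‖ =
      ‖c K‖ * Real.exp (α * (J - K : ℤ)) := by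
    rw [norm_mul, norm_exp_add_mul_I_mul_intCast]
  have hbound : Summable fun K : ℤ ↦ ‖c K‖ * Real.exp (α * (J - K : ℤ)) := by
    simpa only [hnorm] using (hsum 0).summable.norm
  refine intervalIntegral.hasSum_integral_of_dominated_convergence
    (fun K _ ↦ ‖c K‖ * Real.exp (α * (J - K : ℤ))) (fun K ↦ ?_)
    (fun K ↦ .of_forall fun t _ ↦ (hnorm K t).le) (.of_forall fun _ _ ↦ hbound)
    intervalIntegrable_const (.of_forall fun t _ ↦ hsum t)
  exact Continuous.aestronglyMeasurable (by fun_prop)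

lemma intervalIntegral_exp_mul_of_hasSum
    (hf : ∀ t : ℝ, HasSum (fun K : ℤ ↦ c K * Complex.exp (-(α + t * Complex.I) * K)) (f t))
    (J : ℤ) :
    ∫ t in (-π)..π, Complex.exp ((α + t * Complex.I) * J) * f t = 2 * π * c J := by
  refine (hasSum_intervalIntegral_exp_mul hf J).unique ?_
  simp only [intervalIntegral.integral_const_mul, intervalIntegral_exp_add_mul_I_mul_intCast,
    sub_eq_zero]
  convert hasSum_single J fun K hK ↦ ?_ using 1
  · rw [if_pos rfl, mul_comm]
  · rw [if_neg hK.symm, mul_zero]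

end CoefficientExtraction

lemma summable_integral_of_tsum_lintegral_enorm_ne_top {ι X E : Type*} [MeasurableSpace X]
    [NormedAddCommGroup E] [NormedSpace ℝ E] [CompleteSpace E] {μ : ι → Measure X}
    {f : ι → X → E} (hf : ∑' i, ∫⁻ x, ‖f i x‖ₑ ∂μ i ≠ ⊤) :
    Summable fun i ↦ ∫ x, f i x ∂μ i :=
  (ENNReal.summable_toReal hf).of_norm_bounded fun i ↦ by
    simpa only [ofReal_norm] using norm_integral_le_lintegral_norm (μ := μ i) (f i)

/-- The coefficient of `exp (-s * K)` in the vacuum term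
`(1 - exp (-(βL - s))) * (1 - exp (-s))` of the reduced partition function. -/
def vacuumCoeff (βL : ℂ) (K : ℤ) : ℂ :=
  if K = 0 then 1 + Complex.exp (-βL)
  else if K = 1 then -1
  else if K = -1 then -Complex.exp (-βL)
  else 0

lemma vacuumCoeff_eq_zero (βL : ℂ) {K : ℤ} (hK : 2 ≤ |K|) : vacuumCoeff βL K = 0 := by
  have : K ≠ 0 ∧ K ≠ 1 ∧ K ≠ -1 := by grind
  simp [vacuumCoeff, this]

lemma hasSum_vacuumCoeff_mul_exp (βL s : ℂ) :
    HasSum (fun K : ℤ ↦ vacuumCoeff βL K * Complex.exp (-s * K))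
      ((1 - Complex.exp (-(βL - s))) * (1 - Complex.exp (-s))) := by
  have hsupport (K : ℤ) (hK : K ∉ ({0, 1, -1} : Finset ℤ)) :
      vacuumCoeff βL K * Complex.exp (-s * K) = 0 := by
    simp_all [vacuumCoeff]
  have hexp : Complex.exp s * Complex.exp (-s) = 1 := by
    rw [← Complex.exp_add, add_neg_cancel, Complex.exp_zero]
  have hsub : Complex.exp (-(βL - s)) = Complex.exp (-βL) * Complex.exp s := by
    rw [← Complex.exp_add]
    ring_nf
  have hsum : ∑ K ∈ ({0, 1, -1} : Finset ℤ), vacuumCoeff βL K * Complex.exp (-s * K) =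
      1 + Complex.exp (-βL) - Complex.exp (-s) - Complex.exp (-βL) * Complex.exp s := by
    simp [vacuumCoeff, sub_eq_add_neg, add_assoc]
  have hfactor : (1 - Complex.exp (-(βL - s))) * (1 - Complex.exp (-s)) =
      1 + Complex.exp (-βL) - Complex.exp (-s) - Complex.exp (-βL) * Complex.exp s := by
    rw [hsub]
    linear_combination Complex.exp (-βL) * hexp
  rw [hfactor, ← hsum]
  exact hasSum_sum_of_ne_finset_zero hsupport

section Ztilde

variable (A : ℝ) (ν : ℤ → Measure ℝ)

lemma exp_mul_integral_exp_eq_Fgen_mul_exp (βL s : ℂ) (K : ℤ) :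
    Complex.exp (A * βL) * ∫ h : ℝ, Complex.exp (-(βL - s) * h - s * (h + K)) ∂ν K =
      Fgen A ν βL K * Complex.exp (-s * K) := by
  rw [Fgen, ← integral_const_mul, ← integral_mul_const]
  congr with h
  rw [← Complex.exp_add, ← Complex.exp_add]
  ring_nf

variable {ν}

lemma summable_integral_exp {βL βR : ℂ}
    (hν : ∑' K : ℤ, ∫⁻ h : ℝ, ENNReal.ofReal (Real.exp (-βL.re * h - βR.re * (h + K))) ∂ν K ≠ ⊤) :
    Summable fun K : ℤ ↦ ∫ h : ℝ, Complex.exp (-βL * h - βR * (h + K)) ∂ν K := by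
  refine summable_integral_of_tsum_lintegral_enorm_ne_top ?_
  simpa [← ofReal_norm, Complex.norm_exp] using hν

lemma hasSum_Ztilde_sub {βL s : ℂ}
    (hν : ∑' K : ℤ, ∫⁻ h : ℝ,
      ENNReal.ofReal (Real.exp (-(βL.re - s.re) * h - s.re * (h + K))) ∂ν K ≠ ⊤) :
    HasSum
      (fun K : ℤ ↦ (Complex.exp (A * βL) * vacuumCoeff βL K + Fgen A ν βL K) *
        Complex.exp (-s * K))
      (Ztilde A ν (βL - s) s) := by
  have hprimaries := (summable_integral_exp (βL := βL - s) (βR := s) hν).hasSum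
  rw [Ztilde, sub_add_cancel]
  refine (((hasSum_vacuumCoeff_mul_exp βL s).add hprimaries).mul_left _).congr_fun fun K ↦ ?_
  rw [mul_add, exp_mul_integral_exp_eq_Fgen_mul_exp]
  ring

lemma intervalIntegral_exp_mul_Ztilde {βL : ℂ} {α : ℝ}
    (hν : ∑' K : ℤ, ∫⁻ h : ℝ,
      ENNReal.ofReal (Real.exp (-(βL.re - α) * h - α * (h + K))) ∂ν K ≠ ⊤) (J : ℤ) :
    ∫ t in (-π)..π, Complex.exp ((α + t * Complex.I) * J) *
        Ztilde A ν (βL - α - t * Complex.I) (α + t * Complex.I) =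
      2 * π * (Complex.exp (A * βL) * vacuumCoeff βL J + Fgen A ν βL J) := by
  simp only [sub_sub]
  exact intervalIntegral_exp_mul_of_hasSum
    (fun t ↦ hasSum_Ztilde_sub A (s := α + t * Complex.I) (by simpa using hν)) J

end Ztilde

theorem F_contour_representation_general (A : ℝ) (ν : ℤ → Measure ℝ) (βL : ℂ) (α : ℝ)
    (hν : ∑' K : ℤ, ∫⁻ h : ℝ,
      ENNReal.ofReal (Real.exp (-(βL.re - α) * h - α * (h + K))) ∂ν K ≠ ⊤)
    (J : ℤ) (hJ : 2 ≤ |J|) :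
    Fgen A ν βL J =
      ∫ t in (-π)..π, (1 / (2 * π) : ℝ) •
        (Complex.exp ((α + t * Complex.I) * J) *
          Ztilde A ν (βL - α - t * Complex.I) (α + t * Complex.I)) := by
  have hpi : (π : ℂ) ≠ 0 := Complex.ofReal_ne_zero.mpr pi_ne_zero
  rw [intervalIntegral.integral_smul, intervalIntegral_exp_mul_Ztilde A hν,
    vacuumCoeff_eq_zero βL hJ, mul_zero, zero_add, Complex.real_smul]
  push_cast
  field_simp

/-- The contour-integral representation of `F(β_L, J)` in terms of the reduced partition
function, valid for `0 < α < Re β_L` and `|J| ≥ 2`. -/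
theorem F_contour_representation
    (A Tgap : ℝ) (hA : 0 < A) (hTgap : 0 < Tgap)
    (ν : ℤ → Measure ℝ) (hspec : IsSpectrum Tgap ν)
    (βL : ℂ) (hβL : 0 < βL.re) (α : ℝ) (hα : 0 < α) (hα' : α < βL.re)
    (J : ℤ) (hJ : 2 ≤ |J|) :
    Fgen A ν βL J =
      ∫ t in (-π)..π, (1 / (2 * π) : ℝ) •
        (Complex.exp (((α : ℂ) + (t : ℂ) * Complex.I) * (J : ℂ)) *
          Ztilde A ν (βL - (α : ℂ) - (t : ℂ) * Complex.I) ((α : ℂ) + (t : ℂ) * Complex.I)) :=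
  F_contour_representation_general A ν βL α
    (hspec.2 (βL.re - α) α (sub_pos.mpr hα') hα).ne J hJ
end
end

section
/- Fix A > 0. For every complex β_L with Re(β_L) > 0, e^{A·β_L} · ∫_A^∞ ρ_c(h) · e^{−β_L·h} dh = √(2π/β_L) · e^{4π²A/β_L} · (1 − e^{−4π²/β_L}), where the square root is the principal branch; in particular the integral on the left converges absolutely. -/
open MeasureTheory Filter Topology Real

noncomputable section

/-!
Substituting `h = A + x²` cancels the factor `(h - A)^(-1/2)` against the Jacobian and leaves
integrals of `cosh (c x) e^(-β x²)`, where `c² = 16π²A` or `c² = 16π²(A - 1)`; the `cos` branch of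
the density is the case of imaginary `c`. Such an integrand is even and its integral over the whole
line is a Gaussian integral, equal to `√(π/β) e^(c²/(4β))`.
-/

section ChangeOfVariables

variable {E : Type*} [NormedAddCommGroup E]

lemma integrableOn_Ioi_comp_const_add_iff (f : ℝ → E) (a b : ℝ) :
    IntegrableOn (fun x => f (a + x)) (Set.Ioi b) ↔ IntegrableOn f (Set.Ioi (a + b)) := by
  rw [← Set.image_const_add_Ioi,
    (measurePreserving_add_left volume a).integrableOn_image (measurableEmbedding_addLeft a)]
  rfl

variable [NormedSpace ℝ E]

lemma setIntegral_Ioi_comp_const_add (f : ℝ → E) (a b : ℝ) :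
    ∫ x in Set.Ioi b, f (a + x) = ∫ x in Set.Ioi (a + b), f x := by
  rw [← Set.image_const_add_Ioi, (measurePreserving_add_left volume a).setIntegral_image_emb
    (measurableEmbedding_addLeft a)]

lemma inv_sqrt_smul_comp_sqrt_eqOn_rpow (f : ℝ → E) :
    Set.EqOn (fun x => (√x)⁻¹ • f √x)
      (fun x => x ^ ((1 / 2 : ℝ) - 1) • f (x ^ (1 / 2 : ℝ))) (Set.Ioi 0) := by
  intro x hx
  have hpow : x ^ ((1 / 2 : ℝ) - 1) = (√x)⁻¹ := by
    rw [Real.sqrt_eq_rpow, ← Real.rpow_neg (le_of_lt hx)]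
    norm_num
  simp only [hpow, Real.sqrt_eq_rpow]

lemma integrableOn_Ioi_inv_sqrt_smul_comp_sqrt_iff (f : ℝ → E) :
    IntegrableOn (fun x => (√x)⁻¹ • f √x) (Set.Ioi 0) ↔ IntegrableOn f (Set.Ioi 0) := by
  rw [integrableOn_congr_fun (inv_sqrt_smul_comp_sqrt_eqOn_rpow f) measurableSet_Ioi,
    integrableOn_Ioi_comp_rpow_iff' f (by norm_num)]

lemma setIntegral_Ioi_inv_sqrt_smul_comp_sqrt (f : ℝ → E) :
    ∫ x in Set.Ioi 0, (√x)⁻¹ • f √x = (2 : ℝ) • ∫ x in Set.Ioi 0, f x := by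
  rw [setIntegral_congr_fun measurableSet_Ioi (inv_sqrt_smul_comp_sqrt_eqOn_rpow f),
    ← integral_comp_rpow_Ioi_of_pos (g := f) one_half_pos]
  simp_rw [mul_smul]
  rw [integral_smul, smul_smul]
  norm_num

lemma two_smul_setIntegral_Ioi_of_even {f : ℝ → E} (hf : Integrable f) (heven : Function.Even f) :
    (2 : ℝ) • ∫ x in Set.Ioi 0, f x = ∫ x, f x := by
  have hreflect : ∫ x in Set.Iic 0, f x = ∫ x in Set.Ioi 0, f x := by
    simpa only [neg_zero, heven _] using integral_comp_neg_Iic 0 f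
  rw [← intervalIntegral.integral_Iic_add_Ioi hf.integrableOn hf.integrableOn, hreflect, two_smul]

end ChangeOfVariables

section Gaussian

variable {b : ℂ}

lemma cosh_mul_cexp_neg_mul_sq (b c : ℂ) (x : ℝ) :
    Complex.cosh (c * x) * Complex.exp (-b * (x : ℂ) ^ 2) =
      (Complex.exp (-b * (x : ℂ) ^ 2 + c * x + 0) +
        Complex.exp (-b * (x : ℂ) ^ 2 + -c * x + 0)) / 2 := by
  simp only [Complex.cosh, add_zero, Complex.exp_add, neg_mul]
  ring

lemma integrable_cosh_mul_cexp_neg_mul_sq (hb : 0 < b.re) (c : ℂ) :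
    Integrable fun x : ℝ => Complex.cosh (c * x) * Complex.exp (-b * (x : ℂ) ^ 2) := by
  simp only [cosh_mul_cexp_neg_mul_sq]
  exact ((integrable_cexp_quadratic hb c 0).add (integrable_cexp_quadratic hb (-c) 0)).div_const 2

lemma integral_cosh_mul_cexp_neg_mul_sq (hb : 0 < b.re) (c : ℂ) :
    ∫ x : ℝ, Complex.cosh (c * x) * Complex.exp (-b * (x : ℂ) ^ 2) =
      (π / b) ^ (1 / 2 : ℂ) * Complex.exp (c ^ 2 / (4 * b)) := by
  have hb' : (-b).re < 0 := by simpa using hb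
  simp only [cosh_mul_cexp_neg_mul_sq]
  rw [integral_div, integral_add (integrable_cexp_quadratic hb c 0)
      (integrable_cexp_quadratic hb (-c) 0),
    integral_cexp_quadratic hb', integral_cexp_quadratic hb', neg_sq, add_self_div_two, neg_neg,
    zero_sub, mul_neg, div_neg, neg_neg]

lemma inv_sqrt_smul_cosh_mul_cexp_eqOn (b c : ℂ) :
    Set.EqOn (fun u : ℝ => (√u)⁻¹ • (Complex.cosh (c * √u) * Complex.exp (-b * u)))
      (fun u => (√u)⁻¹ • (Complex.cosh (c * √u) * Complex.exp (-b * (√u : ℂ) ^ 2)))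
      (Set.Ioi 0) := by
  intro u hu
  have hsq : ((√u : ℝ) : ℂ) ^ 2 = u := mod_cast Real.sq_sqrt (le_of_lt hu)
  simp only [hsq]

lemma integrableOn_Ioi_inv_sqrt_smul_cosh_mul_cexp (hb : 0 < b.re) (c : ℂ) :
    IntegrableOn (fun u : ℝ => (√u)⁻¹ • (Complex.cosh (c * √u) * Complex.exp (-b * u)))
      (Set.Ioi 0) := by
  rw [integrableOn_congr_fun (inv_sqrt_smul_cosh_mul_cexp_eqOn b c) measurableSet_Ioi]
  exact (integrableOn_Ioi_inv_sqrt_smul_comp_sqrt_iff _).2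
    (integrable_cosh_mul_cexp_neg_mul_sq hb c).integrableOn

lemma setIntegral_Ioi_inv_sqrt_smul_cosh_mul_cexp (hb : 0 < b.re) (c : ℂ) :
    ∫ u : ℝ in Set.Ioi 0, (√u)⁻¹ • (Complex.cosh (c * √u) * Complex.exp (-b * u)) =
      (π / b) ^ (1 / 2 : ℂ) * Complex.exp (c ^ 2 / (4 * b)) := by
  have heven : Function.Even fun x : ℝ =>
      Complex.cosh (c * x) * Complex.exp (-b * (x : ℂ) ^ 2) := fun x => by simp
  rw [setIntegral_congr_fun measurableSet_Ioi (inv_sqrt_smul_cosh_mul_cexp_eqOn b c),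
    setIntegral_Ioi_inv_sqrt_smul_comp_sqrt fun x : ℝ =>
      Complex.cosh (c * x) * Complex.exp (-b * (x : ℂ) ^ 2),
    two_smul_setIntegral_Ioi_of_even (integrable_cosh_mul_cexp_neg_mul_sq hb c) heven,
    integral_cosh_mul_cexp_neg_mul_sq hb]

end Gaussian

section ComplexSqrt

lemma complex_sqrt_sq (z : ℂ) : z.sqrt ^ 2 = z :=
  Complex.cpow_ofNat_inv_pow z 2

lemma complex_sqrt_ofReal {t : ℝ} (ht : 0 ≤ t) : (t : ℂ).sqrt = √t :=
  Complex.sqrt_of_nonneg (Complex.zero_le_real.2 ht)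

lemma complex_sqrt_neg_ofReal {t : ℝ} (ht : 0 ≤ t) : (-t : ℂ).sqrt = √t * Complex.I := by
  rw [Complex.sqrt_neg_of_nonneg (Complex.zero_le_real.2 ht), complex_sqrt_ofReal ht, mul_comm]

lemma ofReal_mul_cpow {r : ℝ} (hr : 0 ≤ r) (z s : ℂ) :
    ((r : ℂ) * z) ^ s = (r : ℂ) ^ s * z ^ s := by
  rcases eq_or_ne s 0 with rfl | hs
  · simp
  rcases hr.eq_or_lt with rfl | hr'
  · simp [hs]
  rcases eq_or_ne z 0 with rfl | hz
  · simp [hs]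
  have hr₀ : (r : ℂ) ≠ 0 := Complex.ofReal_ne_zero.2 hr'.ne'
  rw [Complex.cpow_def_of_ne_zero (mul_ne_zero hr₀ hz), Complex.cpow_def_of_ne_zero hr₀,
    Complex.cpow_def_of_ne_zero hz, Complex.log_ofReal_mul hr' hz, Complex.ofReal_log hr,
    add_mul, Complex.exp_add]

lemma ofReal_mul_cpow_one_half {r : ℝ} (hr : 0 ≤ r) (z : ℂ) :
    ((r : ℂ) * z) ^ (1 / 2 : ℂ) = √r * z ^ (1 / 2 : ℂ) := by
  rw [ofReal_mul_cpow hr, ← complex_sqrt_ofReal hr, Complex.sqrt, one_div]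

lemma cosh_mul_complex_sqrt_mul_sqrt (k u : ℝ) {t : ℝ} (ht : 0 ≤ t) :
    Complex.cosh (k * (t : ℂ).sqrt * √u) = Real.cosh (k * √(t * u)) := by
  rw [complex_sqrt_ofReal ht, Real.sqrt_mul ht]
  push_cast
  rw [mul_assoc]

lemma cosh_mul_complex_sqrt_neg_mul_sqrt (k u : ℝ) {t : ℝ} (ht : 0 ≤ t) :
    Complex.cosh (k * (-t : ℂ).sqrt * √u) = Real.cos (k * √(t * u)) := by
  rw [complex_sqrt_neg_ofReal ht, Real.sqrt_mul ht]
  push_cast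
  rw [← Complex.cosh_mul_I]
  ring_nf

end ComplexSqrt

lemma rhoc_const_add {A u : ℝ} (hA : 0 ≤ A) (hu : 0 < u) :
    (rhoc A (A + u) : ℂ) =
      √2 * ((√u)⁻¹ • (Complex.cosh ((4 * π : ℝ) * (A : ℂ).sqrt * √u) -
        Complex.cosh ((4 * π : ℝ) * (A - 1 : ℂ).sqrt * √u))) := by
  have hlt : ¬A + u ≤ A := by linarith
  rw [rhoc, if_neg hlt, add_sub_cancel_left, Real.sqrt_div zero_le_two,
    cosh_mul_complex_sqrt_mul_sqrt _ _ hA, Complex.real_smul]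
  split_ifs with hA1
  · have hcosh := cosh_mul_complex_sqrt_mul_sqrt (4 * π) u (sub_nonneg.2 hA1)
    rw [Complex.ofReal_sub, Complex.ofReal_one] at hcosh
    rw [hcosh]
    push_cast
    ring
  · have hcos := cosh_mul_complex_sqrt_neg_mul_sqrt (4 * π) u (sub_nonneg.2 (not_le.1 hA1).le)
    rw [Complex.ofReal_sub, Complex.ofReal_one, neg_sub] at hcos
    rw [hcos]
    push_cast
    ring

lemma rhoc_const_add_mul_cexp_eqOn {A : ℝ} (hA : 0 ≤ A) (β : ℂ) :
    Set.EqOn (fun u : ℝ => (rhoc A (A + u) : ℂ) * Complex.exp (-β * (A + u : ℝ)))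
      (fun u => √2 * Complex.exp (-β * A) *
        ((√u)⁻¹ • (Complex.cosh ((4 * π : ℝ) * (A : ℂ).sqrt * √u) * Complex.exp (-β * u)) -
          (√u)⁻¹ • (Complex.cosh ((4 * π : ℝ) * (A - 1 : ℂ).sqrt * √u) * Complex.exp (-β * u))))
      (Set.Ioi 0) := by
  intro u hu
  simp only [rhoc_const_add hA hu, Complex.ofReal_add, mul_add, Complex.exp_add,
    Complex.real_smul]
  ring

lemma cexp_four_pi_sqrt_sq_div (z β : ℂ) :
    Complex.exp (((4 * π : ℝ) * z.sqrt) ^ 2 / (4 * β)) = Complex.exp (4 * π ^ 2 * z / β) := by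
  rw [mul_pow, complex_sqrt_sq]
  push_cast
  congr 1
  ring

lemma integrableOn_rhoc_mul_cexp {A : ℝ} (hA : 0 ≤ A) {β : ℂ} (hβ : 0 < β.re) :
    IntegrableOn (fun h : ℝ => (rhoc A h : ℂ) * Complex.exp (-β * h)) (Set.Ioi A) := by
  rw [← add_zero A, ← integrableOn_Ioi_comp_const_add_iff, add_zero,
    integrableOn_congr_fun (rhoc_const_add_mul_cexp_eqOn hA β) measurableSet_Ioi]
  exact ((integrableOn_Ioi_inv_sqrt_smul_cosh_mul_cexp hβ _).sub
    (integrableOn_Ioi_inv_sqrt_smul_cosh_mul_cexp hβ _)).const_mul _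

lemma setIntegral_rhoc_mul_cexp {A : ℝ} (hA : 0 ≤ A) {β : ℂ} (hβ : 0 < β.re) :
    ∫ h : ℝ in Set.Ioi A, (rhoc A h : ℂ) * Complex.exp (-β * h) =
      √2 * Complex.exp (-β * A) * ((π / β) ^ (1 / 2 : ℂ) *
        (Complex.exp (4 * π ^ 2 * A / β) - Complex.exp (4 * π ^ 2 * (A - 1) / β))) := by
  rw [← add_zero A, ← setIntegral_Ioi_comp_const_add, add_zero,
    setIntegral_congr_fun measurableSet_Ioi (rhoc_const_add_mul_cexp_eqOn hA β),
    integral_const_mul, integral_sub (integrableOn_Ioi_inv_sqrt_smul_cosh_mul_cexp hβ _)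
      (integrableOn_Ioi_inv_sqrt_smul_cosh_mul_cexp hβ _),
    setIntegral_Ioi_inv_sqrt_smul_cosh_mul_cexp hβ, setIntegral_Ioi_inv_sqrt_smul_cosh_mul_cexp hβ,
    cexp_four_pi_sqrt_sq_div, cexp_four_pi_sqrt_sq_div, ← mul_sub]

/-- The Laplace transform of `ρ_c`: for `Re β_L > 0`,
`e^(Aβ_L) ∫_A^∞ ρ_c(h) e^(-β_L h) dh = √(2π/β_L) e^(4π²A/β_L) (1 - e^(-4π²/β_L))`,
and the integral converges absolutely. -/
theorem rhoc_laplace_transform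
    (A : ℝ) (hA : 0 < A) (βL : ℂ) (hβL : 0 < βL.re) :
    IntegrableOn (fun h : ℝ => ((rhoc A h : ℝ) : ℂ) * Complex.exp (-βL * (h : ℂ)))
      (Set.Ioi A) ∧
    Complex.exp ((A : ℂ) * βL) *
        (∫ h in Set.Ioi A, ((rhoc A h : ℝ) : ℂ) * Complex.exp (-βL * (h : ℂ))) =
      (2 * (π : ℂ) / βL) ^ ((1 : ℂ) / 2) * Complex.exp (4 * (π : ℂ) ^ 2 * (A : ℂ) / βL) *
        (1 - Complex.exp (-(4 * (π : ℂ) ^ 2) / βL)) := by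
  refine ⟨integrableOn_rhoc_mul_cexp hA.le hβL, ?_⟩
  have hsqrt : (2 * (π : ℂ) / βL) ^ ((1 : ℂ) / 2) = √2 * (π / βL) ^ (1 / 2 : ℂ) := by
    rw [mul_div_assoc, ← ofReal_mul_cpow_one_half zero_le_two, Complex.ofReal_ofNat]
  have hshift : Complex.exp ((A : ℂ) * βL) * Complex.exp (-βL * A) = 1 := by
    rw [← Complex.exp_add, neg_mul, mul_comm, add_neg_cancel, Complex.exp_zero]
  have hsplit : Complex.exp (4 * (π : ℂ) ^ 2 * (A - 1) / βL) =
      Complex.exp (4 * (π : ℂ) ^ 2 * A / βL) * Complex.exp (-(4 * (π : ℂ) ^ 2) / βL) := by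
    rw [← Complex.exp_add]
    congr 1
    ring
  rw [setIntegral_rhoc_mul_cexp hA.le hβL, hsqrt, hsplit]
  linear_combination (√2 * (π / βL) ^ (1 / 2 : ℂ) * Complex.exp (4 * (π : ℂ) ^ 2 * A / βL) *
    (1 - Complex.exp (-(4 * (π : ℂ) ^ 2) / βL))) * hshift
end
end

section
/- Fix A > 0. Then lim_{α→0⁺} 4π^{3/2}·√A · α^{−3/2} · e^{−4π²A/α} · ∫_{−π}^{π} (dt/2π) e^{4π²·A·α/(α² + t²)} = 1; that is, ∫_{−π}^{π} (dt/2π) e^{4π²Aα/(α²+t²)} is asymptotic to (α^{3/2}/(4π^{3/2}√A))·e^{4π²A/α} as α → 0⁺. -/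
open MeasureTheory Filter Topology Real

noncomputable section

/-!
The exponent `B α / (α² + t²)` has its maximum `B / α` at `t = 0`. Substituting `t = α ^ (3/2) s`
turns it into `B / α - B s² / (1 + α s²)`, whose second term tends to the Gaussian exponent `-B s²`
as `α → 0⁺`. The domain of integration being bounded, `α³ s²` stays bounded; this is why the cubic
bound `exp (-x) ≤ (1 + x / 3)⁻³` dominates the rescaled integrand by a constant times
`(1 + B s² / 3)⁻¹`, uniformly in `α`. Dominated convergence then gives the Gaussian integral
`√(π / B)`.
-/

lemma integrable_inv_one_add_mul_sq {c : ℝ} (hc : 0 < c) :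
    Integrable fun s : ℝ => (1 + c * s ^ 2)⁻¹ := by
  simpa only [mul_pow, sq_sqrt hc.le] using
    integrable_inv_one_add_sq.comp_mul_left' (sqrt_ne_zero'.mpr hc)

lemma exp_neg_le_inv_one_add_div_pow {x : ℝ} (hx : 0 ≤ x) (n : ℕ) :
    exp (-x) ≤ ((1 + x / n) ^ n)⁻¹ := by
  have hpow : (1 + x / n) ^ n ≤ exp x := by
    simpa only [neg_div, sub_neg_eq_add, neg_neg] using
      one_sub_div_pow_le_exp_neg (show -x ≤ n from (neg_nonpos.mpr hx).trans n.cast_nonneg)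
  rw [exp_neg]
  gcongr

lemma one_add_mul_sq_pow_three_le {a c s L : ℝ} (ha : 0 ≤ a) (hc : 0 < c)
    (hs : a ^ 3 * s ^ 2 ≤ L ^ 2) :
    (1 + a * s ^ 2) ^ 3 ≤ 4 * (1 + (L / c) ^ 2) * (1 + c * s ^ 2) ^ 2 := by
  have hcs : 0 ≤ c * s ^ 2 := by positivity
  calc
    (1 + a * s ^ 2) ^ 3 ≤ 2 ^ 2 * (1 ^ 3 + (a * s ^ 2) ^ 3) :=
      add_pow_le zero_le_one (by positivity) 3
    _ = 4 * (1 + a ^ 3 * s ^ 2 * s ^ 4) := by ring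
    _ ≤ 4 * (1 + L ^ 2 * s ^ 4) := by gcongr
    _ = 4 * (1 + (L / c) ^ 2 * (c * s ^ 2) ^ 2) := by field_simp
    _ ≤ 4 * (1 + (L / c) ^ 2) * (1 + c * s ^ 2) ^ 2 := by
      nlinarith [sq_nonneg (L / c), mul_nonneg (sq_nonneg (L / c)) hcs]

lemma exp_neg_mul_sq_div_le {B a s L : ℝ} (hB : 0 < B) (ha : 0 ≤ a)
    (hs : a ^ 3 * s ^ 2 ≤ L ^ 2) :
    exp (-(B * s ^ 2 / (1 + a * s ^ 2))) ≤
      4 * (1 + (L / (B / 3)) ^ 2) * (1 + B / 3 * s ^ 2)⁻¹ := by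
  set y := 1 + a * s ^ 2
  set z := 1 + B / 3 * s ^ 2
  have hy : 0 < y := by positivity
  have hz : 0 < z := by positivity
  have hzy : z / y ≤ 1 + B * s ^ 2 / y / 3 := by
    rw [div_le_iff₀ hy]
    field_simp
    simp only [y, z]
    nlinarith [mul_nonneg ha (sq_nonneg s)]
  calc
    exp (-(B * s ^ 2 / y)) ≤ ((1 + B * s ^ 2 / y / 3) ^ 3)⁻¹ :=
      mod_cast exp_neg_le_inv_one_add_div_pow (by positivity) 3
    _ ≤ ((z / y) ^ 3)⁻¹ := by gcongr
    _ = y ^ 3 / z ^ 3 := by rw [div_pow, inv_div]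
    _ ≤ 4 * (1 + (L / (B / 3)) ^ 2) * z ^ 2 / z ^ 3 := by
      gcongr
      exact one_add_mul_sq_pow_three_le ha (by positivity) hs
    _ = 4 * (1 + (L / (B / 3)) ^ 2) * z⁻¹ := by field_simp

lemma tendsto_exp_neg_mul_sq_div (B s : ℝ) :
    Tendsto (fun a : ℝ => exp (-(B * s ^ 2 / (1 + a * s ^ 2)))) (𝓝 0) (𝓝 (exp (-B * s ^ 2))) := by
  have hcont : ContinuousAt (fun a : ℝ => exp (-(B * s ^ 2 / (1 + a * s ^ 2)))) 0 := by
    have : 1 + 0 * s ^ 2 ≠ 0 := by norm_num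
    fun_prop (disch := assumption)
  simpa using hcont.tendsto

lemma rpow_three_halves_sq {a : ℝ} (ha : 0 ≤ a) : (a ^ (3 / 2 : ℝ)) ^ 2 = a ^ 3 := by
  rw [← rpow_mul_natCast ha, ← rpow_natCast]
  norm_num

lemma rpow_three_halves_eq_mul_sqrt {a : ℝ} (ha : 0 ≤ a) : a ^ (3 / 2 : ℝ) = a * √a := by
  rw [sqrt_eq_rpow, ← rpow_one_add' ha (by norm_num)]
  norm_num

lemma eventually_rpow_three_halves_mul_mem {S : Set ℝ} (hS : S ∈ 𝓝 0) (s : ℝ) :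
    ∀ᶠ a : ℝ in 𝓝 0, a ^ (3 / 2 : ℝ) * s ∈ S := by
  have hcont : ContinuousAt (fun a : ℝ => a ^ (3 / 2 : ℝ) * s) 0 :=
    (continuousAt_rpow_const _ _ (.inr (by norm_num))).mul continuousAt_const
  refine hcont.eventually_mem ?_
  rwa [zero_rpow (by norm_num), zero_mul]

lemma setIntegral_eq_smul_setIntegral_preimage_mul_left {E : Type*} [NormedAddCommGroup E]
    [NormedSpace ℝ E] {c : ℝ} {S : Set ℝ} {f : ℝ → E} (hc : 0 < c) (hS : MeasurableSet S) :
    ∫ t in S, f t = c • ∫ s in (c * ·) ⁻¹' S, f (c * s) := by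
  have hsubst : ∫ s, S.indicator f (c * s) = c⁻¹ • ∫ t, S.indicator f t := by
    rw [Measure.integral_comp_mul_left, abs_of_pos (inv_pos.mpr hc)]
  rw [← integral_indicator hS, ← integral_indicator (hS.preimage (by fun_prop)),
    ← inv_smul_eq_iff₀ hc.ne', ← hsubst]
  rfl

lemma setIntegral_exp_mul_div_eq {B a : ℝ} {S : Set ℝ} (ha : 0 < a) (hS : MeasurableSet S) :
    ∫ t in S, exp (B * a / (a ^ 2 + t ^ 2)) =
      a ^ (3 / 2 : ℝ) * exp (B / a) *
        ∫ s in (a ^ (3 / 2 : ℝ) * ·) ⁻¹' S, exp (-(B * s ^ 2 / (1 + a * s ^ 2))) := by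
  set c := a ^ (3 / 2 : ℝ)
  have hc : 0 < c := rpow_pos_of_pos ha _
  have hexp (s : ℝ) : exp (B * a / (a ^ 2 + (c * s) ^ 2)) =
      exp (B / a) * exp (-(B * s ^ 2 / (1 + a * s ^ 2))) := by
    rw [← exp_add, mul_pow, rpow_three_halves_sq ha.le,
      show a ^ 2 + a ^ 3 * s ^ 2 = a ^ 2 * (1 + a * s ^ 2) by ring]
    congr 1
    field_simp
    ring
  rw [setIntegral_eq_smul_setIntegral_preimage_mul_left hc hS]
  simp only [hexp, integral_const_mul, smul_eq_mul, mul_assoc]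

lemma tendsto_setIntegral_preimage_exp_neg_mul_sq_div {B : ℝ} {S : Set ℝ} (hB : 0 < B)
    (hS : MeasurableSet S) (hSb : Bornology.IsBounded S) (hS0 : S ∈ 𝓝 0) :
    Tendsto (fun a : ℝ =>
        ∫ s in (a ^ (3 / 2 : ℝ) * ·) ⁻¹' S, exp (-(B * s ^ 2 / (1 + a * s ^ 2))))
      (𝓝[>] 0) (𝓝 √(π / B)) := by
  obtain ⟨L, hL⟩ := hSb.exists_norm_le
  have hpre (a : ℝ) : MeasurableSet ((a ^ (3 / 2 : ℝ) * ·) ⁻¹' S) := hS.preimage (by fun_prop)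
  simp only [← integral_gaussian, ← integral_indicator (hpre _)]
  refine tendsto_integral_filter_of_dominated_convergence
    (fun s => 4 * (1 + (L / (B / 3)) ^ 2) * (1 + B / 3 * s ^ 2)⁻¹) ?_ ?_ ?_ ?_
  · exact .of_forall fun a =>
      ((by fun_prop : Measurable _).indicator (hpre a)).aestronglyMeasurable
  · filter_upwards [self_mem_nhdsWithin] with a (ha : 0 < a)
    refine .of_forall fun s => ?_
    rw [norm_indicator_eq_indicator_norm]
    refine Set.indicator_apply_le' (fun hs => ?_) (fun _ => by positivity)
    rw [norm_of_nonneg (exp_pos _).le]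
    refine exp_neg_mul_sq_div_le hB ha.le ?_
    rw [← rpow_three_halves_sq ha.le, ← mul_pow]
    exact sq_le_sq.mpr ((hL _ hs).trans (le_abs_self L))
  · exact (integrable_inv_one_add_mul_sq (by positivity)).const_mul _
  · refine .of_forall fun s => Tendsto.mono_left ?_ nhdsWithin_le_nhds
    refine (tendsto_exp_neg_mul_sq_div B s).congr' ?_
    filter_upwards [eventually_rpow_three_halves_mul_mem hS0 s] with a ha
    have hs : s ∈ (a ^ (3 / 2 : ℝ) * ·) ⁻¹' S := ha
    rw [Set.indicator_of_mem hs]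

lemma tendsto_rpow_mul_exp_mul_setIntegral_exp_mul_div {B : ℝ} {S : Set ℝ} (hB : 0 < B)
    (hS : MeasurableSet S) (hSb : Bornology.IsBounded S) (hS0 : S ∈ 𝓝 0) :
    Tendsto (fun a : ℝ =>
        a ^ (-(3 / 2 : ℝ)) * exp (-B / a) * ∫ t in S, exp (B * a / (a ^ 2 + t ^ 2)))
      (𝓝[>] 0) (𝓝 √(π / B)) := by
  refine (tendsto_setIntegral_preimage_exp_neg_mul_sq_div hB hS hSb hS0).congr' ?_
  filter_upwards [self_mem_nhdsWithin] with a (ha : 0 < a)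
  rw [setIntegral_exp_mul_div_eq ha hS, rpow_neg ha.le, neg_div, exp_neg, ← mul_assoc,
    ← mul_inv, inv_mul_cancel₀ (by positivity), one_mul]

lemma sqrt_pi_div_four_mul_pi_sq_mul {A : ℝ} (hA : 0 < A) :
    √(π / (4 * π ^ 2 * A)) = (2 * √π * √A)⁻¹ := by
  rw [sqrt_eq_iff_mul_self_eq_of_pos (by positivity)]
  field_simp
  rw [sq_sqrt pi_pos.le, sq_sqrt hA.le]
  ring

/-- Saddle-point asymptotics: as `α → 0⁺`,
`∫_{-π}^{π} (dt/2π) e^(4π²Aα/(α²+t²)) ∼ (α^(3/2)/(4π^(3/2)√A)) e^(4π²A/α)`. -/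
theorem saddle_point_integral_asymptotics (A : ℝ) (hA : 0 < A) :
    Tendsto
      (fun α : ℝ =>
        4 * π ^ ((3 / 2 : ℝ)) * Real.sqrt A * α ^ (-(3 / 2 : ℝ)) *
          Real.exp (-(4 * π ^ 2 * A) / α) *
          ∫ t in (-π)..π, (1 / (2 * π)) * Real.exp (4 * π ^ 2 * A * α / (α ^ 2 + t ^ 2)))
      (𝓝[>] 0) (𝓝 1) := by
  have hlim := tendsto_rpow_mul_exp_mul_setIntegral_exp_mul_div
    (show 0 < 4 * π ^ 2 * A by positivity) measurableSet_Ioc (Metric.isBounded_Ioc (-π) π)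
    (Ioc_mem_nhds (neg_neg_of_pos pi_pos) pi_pos)
  have hconst : 2 * √π * √A * √(π / (4 * π ^ 2 * A)) = 1 := by
    rw [sqrt_pi_div_four_mul_pi_sq_mul hA, mul_inv_cancel₀ (by positivity)]
  have hscaled := hlim.const_mul (2 * √π * √A)
  rw [hconst] at hscaled
  refine hscaled.congr fun α => ?_
  rw [intervalIntegral.integral_const_mul,
    intervalIntegral.integral_of_le (neg_le_self pi_pos.le),
    rpow_three_halves_eq_mul_sqrt pi_pos.le]
  field_simp
  ring
end
end
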